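/- For every k ≥ 5, every connected graph G on at least k vertices with maximum density m(G) < (k+1)/2, all of whose vertices and edges lie in a single K_k-component, admits a proper (complete) edge-colouring in which no copy of K_k is rainbow. -/

import Mathlib

/-!
Call `(k + 1) |U| - 2 e(U)` the slack of a vertex set `U`. It is positive for every nonempty `U` by
the density assumption, and it is `2 k` for a `k`-clique. Grow a coloured set `U` from a `k`-clique,
keeping all `k`-cliques inside `U` from being rainbow.

* If a vertex `x` outside `U` completes `(k - 1)`-cliques of `U` to `k`-cliques, add `x` and let
  some of its edges to `U` borrow colours of edges inside `U`. Borrowed colours are *heavy*: they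
  may occur more than twice and are hard to reuse. Each such `x` lowers the slack, so heavy
  colours stay few.
* If there is no such `x`, add a whole `k`-clique that meets `U` in as many vertices as possible, at
  least two, and let pairs of disjoint new edges share a colour. By maximality, every `k`-clique
  that this completes contains two edges of one colour.

When neither is possible, every `k`-clique not inside `U` has at most one vertex in `U`. It
therefore survives the deletion of the edges inside `U`, and by induction on the number of edges
the rest of the graph can be coloured with a disjoint supply of colours.
-/

namespace AntiRamsey

open Finset

section Colouring

variable {V α β : Type*} {c c' : Sym2 V → α} {U U' : Finset V} {B B' : Finset α}

/-- A proper edge-colouring of the complete graph on `V`. The loops in `Sym2 V` take part as if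
they were edges; as the supply of colours is unlimited, this is no restriction. -/
def IsProper (c : Sym2 V → α) : Prop := ∀ x, Set.InjOn c {e | x ∈ e}

/-- The colour `γ` does not occur at the vertex `x`. -/
def IsMissingAt (c : Sym2 V → α) (γ : α) (x : V) : Prop := ∀ e, x ∈ e → c e ≠ γ

/-- The edge `e` shares its colour with no other edge. -/
def HasPrivateColour (c : Sym2 V → α) (e : Sym2 V) : Prop := ∀ f, c f = c e → f = e

theorem IsProper.notMem_of_eq (h : IsProper c) {e f : Sym2 V} (hne : e ≠ f) (heq : c e = c f)
    {x : V} (hx : x ∈ e) : x ∉ f :=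
  fun hxf => hne (h x hx hxf heq)

theorem IsProper.comp_injective (h : IsProper c) {φ : α → β} (hφ : φ.Injective) :
    IsProper (φ ∘ c) :=
  fun x => hφ.comp_injOn (h x)

theorem isProper_of_injective (hc : c.Injective) : IsProper c :=
  fun _ => hc.injOn

theorem HasPrivateColour.isMissingAt {e : Sym2 V} (h : HasPrivateColour c e) {x : V}
    (hx : x ∉ e) : IsMissingAt c (c e) x := by
  rintro f hxf hfe
  exact hx (h f hfe ▸ hxf)

/-- A proper colouring `c` in which every edge not inside `U` has a private colour and every colour
outside the set `B` of *heavy* colours occurs at most twice. -/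
structure IsColouringOn (c : Sym2 V → α) (U : Finset V) (B : Finset α) : Prop where
  isProper : IsProper c
  hasPrivateColour : ∀ e ∉ U.sym2, HasPrivateColour c e
  eq_of_eq : ∀ e₁ e₂ e₃, c e₁ ∉ B → c e₁ = c e₂ → c e₁ = c e₃ → e₁ = e₂ ∨ e₁ = e₃ ∨ e₂ = e₃

theorem isColouringOn_of_injective (hc : c.Injective) (U : Finset V) (B : Finset α) :
    IsColouringOn c U B where
  isProper := isProper_of_injective hc
  hasPrivateColour _ _ _ h := hc h
  eq_of_eq _ _ _ _ h _ := Or.inl (hc h)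

theorem IsColouringOn.mono (h : IsColouringOn c U B) (hU : U ⊆ U') (hB : B ⊆ B') :
    IsColouringOn c U' B' where
  isProper := h.isProper
  hasPrivateColour e he := h.hasPrivateColour e fun he' => he (sym2_mono hU he')
  eq_of_eq e₁ e₂ e₃ he := h.eq_of_eq e₁ e₂ e₃ fun he' => he (hB he')

theorem IsColouringOn.isMissingAt_of_eq (h : IsColouringOn c U B) {e f : Sym2 V} (hne : e ≠ f)
    (heq : c e = c f) (he : c e ∉ B) {x : V} (hxe : x ∉ e) (hxf : x ∉ f) :
    IsMissingAt c (c e) x := by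
  intro g hxg hge
  rcases h.eq_of_eq e f g he heq hge.symm with rfl | rfl | rfl
  exacts [hne rfl, hxe hxg, hxf hxg]

theorem IsColouringOn.isMissingAt_or (h : IsColouringOn c U B) {e : Sym2 V} (he : c e ∉ B)
    {x y : V} (hxy : x ≠ y) (hx : x ∉ e) (hy : y ∉ e) (hne : c s(x, y) ≠ c e) :
    IsMissingAt c (c e) x ∨ IsMissingAt c (c e) y := by
  by_contra! hcon
  simp only [IsMissingAt, not_forall, not_not] at hcon
  obtain ⟨⟨f, hxf, hf⟩, g, hyg, hg⟩ := hcon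
  rcases h.eq_of_eq e f g he hf.symm hg.symm with rfl | rfl | rfl
  · exact hx hxf
  · exact hy hyg
  · rw [(Sym2.mem_and_mem_iff hxy).1 ⟨hxf, hyg⟩] at hf
    exact hne hf

theorem IsProper.exists_edge_colour_notMem (h : IsProper c) {I : Finset V} {a : V} (ha : a ∈ I)
    (hB : #B + 1 < #I) : ∃ b ∈ I, a ≠ b ∧ c s(a, b) ∉ B := by
  classical
  have hinj : Set.InjOn (fun b => c s(a, b)) (I.erase a) := fun b _ b' _ hbb' =>
    Sym2.congr_right.1 (h a (Sym2.mem_mk_left a b) (Sym2.mem_mk_left a b') hbb')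
  by_contra! hcon
  have := card_le_card_of_injOn _ (fun b hb => hcon b (mem_of_mem_erase hb)
    (ne_of_mem_erase hb).symm) hinj
  rw [card_erase_of_mem ha] at this
  omega

/-- A sufficient condition for `c` to remain a colouring on `U` with heavy colours `B` when the edge
`e` is given the colour of `f`. -/
structure CanRecolour (c : Sym2 V → α) (U : Finset V) (B : Finset α) (e f : Sym2 V) : Prop where
  left_mem : e ∈ U.sym2
  right_mem : f ∈ U.sym2
  isMissingAt : ∀ x ∈ e, IsMissingAt c (c f) x
  mem_or_hasPrivateColour : c f ∈ B ∨ HasPrivateColour c f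

section Update

variable [DecidableEq V]

theorem IsProper.update (h : IsProper c) {e : Sym2 V} {γ : α} (hγ : ∀ x ∈ e, IsMissingAt c γ x) :
    IsProper (Function.update c e γ) := by
  intro x g hg g' hg' heq
  simp only [Function.update_apply] at heq
  split_ifs at heq with hge hge' hge'
  · exact hge.trans hge'.symm
  · exact absurd heq.symm (hγ x (hge ▸ hg) g' hg')
  · exact absurd heq (hγ x (hge' ▸ hg') g hg)
  · exact h x hg hg' heq

theorem IsColouringOn.update (h : IsColouringOn c U B) {e f : Sym2 V}
    (hef : CanRecolour c U B e f) : IsColouringOn (Function.update c e (c f)) U B where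
  isProper := h.isProper.update hef.isMissingAt
  hasPrivateColour g hg g' heq := by
    rw [Function.update_of_ne (a := g) fun hge => hg (hge ▸ hef.left_mem)] at heq
    by_cases hge' : g' = e
    · subst hge'
      rw [Function.update_self] at heq
      exact absurd (h.hasPrivateColour g hg f heq ▸ hef.right_mem) hg
    · rw [Function.update_of_ne hge'] at heq
      exact h.hasPrivateColour g hg g' heq
  eq_of_eq e₁ e₂ e₃ hB h₁₂ h₁₃ := by
    by_cases hf : Function.update c e (c f) e₁ = c f
    · have hpriv := hef.mem_or_hasPrivateColour.resolve_left (hf ▸ hB)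
      have key (g : Sym2 V) (hg : Function.update c e (c f) g = c f) : g = e ∨ g = f := by
        by_cases hge : g = e
        · exact Or.inl hge
        · rw [Function.update_of_ne hge] at hg
          exact Or.inr (hpriv g hg)
      have := key e₁ hf
      have := key e₂ (h₁₂ ▸ hf)
      have := key e₃ (h₁₃ ▸ hf)
      grind
    · have key (g : Sym2 V) (hg : Function.update c e (c f) e₁ = Function.update c e (c f) g) :
          Function.update c e (c f) g = c g :=
        Function.update_of_ne (by rintro rfl; exact hf (hg.trans (Function.update_self ..))) ..
      rw [key e₂ h₁₂, key e₁ rfl] at h₁₂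
      rw [key e₃ h₁₃, key e₁ rfl] at h₁₃
      exact h.eq_of_eq e₁ e₂ e₃ (key e₁ rfl ▸ hB) h₁₂ h₁₃

theorem CanRecolour.update {e f e' f' : Sym2 V} (h : CanRecolour c U B e' f') (hne : f' ≠ e)
    (hc : c f ≠ c f') : CanRecolour (Function.update c e (c f)) U B e' f' := by
  have huniq {g : Sym2 V} (hg : Function.update c e (c f) g = c f') : c g = c f' := by
    by_cases hge : g = e
    · rw [hge, Function.update_self] at hg
      exact absurd hg hc
    · rwa [Function.update_of_ne hge] at hg
  have hf' : Function.update c e (c f) f' = c f' := Function.update_of_ne hne ..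
  refine ⟨h.left_mem, h.right_mem, fun x hx g hg heq => ?_, ?_⟩
  · exact h.isMissingAt x hx g hg (huniq (heq.trans hf'))
  · rw [hf']
    exact h.mem_or_hasPrivateColour.imp_right fun hpriv g hg => hpriv g (huniq (hg.trans hf'))

end Update

theorem IsColouringOn.exists_recolouring (h : IsColouringOn c U B)
    (L : List (Sym2 V × Sym2 V)) (hL : ∀ q ∈ L, CanRecolour c U B q.1 q.2)
    (hp : L.Pairwise fun q r => q.1 ≠ r.1 ∧ q.1 ≠ r.2 ∧ c q.2 ≠ c r.2) :
    ∃ c', IsColouringOn c' U B ∧ (∀ q ∈ L, c' q.1 = c q.2) ∧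
      ∀ e, (∀ q ∈ L, e ≠ q.1) → c' e = c e := by
  classical
  induction L generalizing c with
  | nil => exact ⟨c, h, by simp, fun _ _ => rfl⟩
  | cons q L ih =>
    rw [List.pairwise_cons] at hp
    rw [List.forall_mem_cons] at hL
    have hold {r : Sym2 V × Sym2 V} (hr : r ∈ L) : Function.update c q.1 (c q.2) r.2 = c r.2 :=
      Function.update_of_ne (hp.1 r hr).2.1.symm ..
    obtain ⟨c', h', hnew, hrest⟩ := ih (h.update hL.1)
      (fun r hr => (hL.2 r hr).update (hp.1 r hr).2.1.symm (hp.1 r hr).2.2)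
      (hp.2.imp_of_mem fun hr hs hrs => by rwa [hold hr, hold hs])
    refine ⟨c', h', ?_, fun e he => ?_⟩
    · rw [List.forall_mem_cons]
      exact ⟨(hrest q.1 fun r hr => (hp.1 r hr).1).trans (Function.update_self ..),
        fun r hr => (hnew r hr).trans (hold hr)⟩
    · rw [List.forall_mem_cons] at he
      exact (hrest e he.2).trans (Function.update_of_ne he.1 ..)

variable [DecidableEq V]

/-- The edges (loops excluded) with both ends in `s`. -/
def edgesIn (s : Finset V) : Finset (Sym2 V) := {e ∈ s.sym2 | ¬ e.IsDiag}

/-- The edges inside `s` have pairwise distinct colours. -/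
def IsRainbow (c : Sym2 V → α) (s : Finset V) : Prop := Set.InjOn c (edgesIn s)

variable {s t I J C : Finset V} {e f : Sym2 V} {a b o v x : V}

theorem mem_edgesIn : e ∈ edgesIn s ↔ (∀ x ∈ e, x ∈ s) ∧ ¬ e.IsDiag := by
  rw [edgesIn, mem_filter, mem_sym2_iff]

theorem mk_mem_edgesIn : s(a, b) ∈ edgesIn s ↔ (a ∈ s ∧ b ∈ s) ∧ a ≠ b := by
  rw [edgesIn, mem_filter, mk_mem_sym2_iff, Sym2.mk_isDiag_iff]

theorem edgesIn_subset_sym2 : edgesIn s ⊆ s.sym2 := filter_subset _ _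

theorem edgesIn_mono (h : s ⊆ t) : edgesIn s ⊆ edgesIn t := filter_subset_filter _ (sym2_mono h)

theorem mem_edgesIn_erase (he : e ∈ edgesIn s) (hv : v ∉ e) : e ∈ edgesIn (s.erase v) := by
  rw [mem_edgesIn] at he ⊢
  exact ⟨fun x hx => mem_erase.2 ⟨by rintro rfl; exact hv hx, he.1 x hx⟩, he.2⟩

theorem card_edgesIn (s : Finset V) : #(edgesIn s) = (#s).choose 2 := by
  rw [← Sym2.card_image_offDiag]
  congr 1
  ext e
  induction e with
  | _ a b =>
    rw [mk_mem_edgesIn]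
    simp only [mem_image, mem_offDiag, Prod.exists, Function.uncurry_apply_pair]
    grind

theorem not_isRainbow_iff :
    ¬ IsRainbow c s ↔ ∃ e ∈ edgesIn s, ∃ f ∈ edgesIn s, c e = c f ∧ e ≠ f := by
  simp [IsRainbow, Set.InjOn]

theorem IsRainbow.mono (h : IsRainbow c t) (hst : s ⊆ t) : IsRainbow c s :=
  Set.InjOn.mono (coe_subset.2 (edgesIn_mono hst)) h

theorem IsRainbow.congr (h : IsRainbow c s) (hs : s ⊆ U) (hc : ∀ e ∈ U.sym2, c' e = c e) :
    IsRainbow c' s :=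
  Set.InjOn.congr h fun e he => (hc e (sym2_mono hs (edgesIn_subset_sym2 he))).symm

theorem IsRainbow.exists_colour_notMem (h : IsRainbow c s) (hs : 4 ≤ #s) (hB : #B ≤ 5) :
    ∃ e ∈ edgesIn s, c e ∉ B := by
  have hedges : Nat.choose 4 2 ≤ #(edgesIn s) := card_edgesIn s ▸ Nat.choose_le_choose 2 hs
  by_contra! hcon
  exact (hedges.trans (card_le_card_of_injOn c hcon h)).not_gt (Nat.lt_succ_of_le hB)

/-- The colour of `e` occurs at no more than one vertex of `s` outside `e`. -/
def IsNearlyMissing (c : Sym2 V → α) (s : Finset V) (e : Sym2 V) : Prop :=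
  ∀ x ∈ s, ∀ y ∈ s, x ∉ e → y ∉ e → x ≠ y → IsMissingAt c (c e) x ∨ IsMissingAt c (c e) y

theorem IsColouringOn.isNearlyMissing (h : IsColouringOn c U B) (heB : c e ∉ B)
    (he : ∀ f ∈ edgesIn s, c f = c e → f = e) : IsNearlyMissing c s e := by
  intro x hx y hy hxe hye hxy
  refine h.isMissingAt_or heB hxy hxe hye fun heq => hxe ?_
  rw [← he _ (mk_mem_edgesIn.2 ⟨⟨hx, hy⟩, hxy⟩) heq]
  exact Sym2.mem_mk_left x y

theorem IsNearlyMissing.exists_isMissingAt (h : IsNearlyMissing c s e) (hs : 4 ≤ #s)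
    (he : e ∈ edgesIn s) : ∃ a ∈ s, a ∉ e ∧ IsMissingAt c (c e) a := by
  have hcard : 1 < #(s \ e.toFinset) := by
    have := le_card_sdiff e.toFinset s
    rw [Sym2.card_toFinset_of_not_isDiag e (mem_edgesIn.1 he).2] at this
    omega
  obtain ⟨a, ha, b, hb, hab⟩ := one_lt_card.1 hcard
  simp only [mem_sdiff, Sym2.mem_toFinset] at ha hb
  rcases h a ha.1 b hb.1 ha.2 hb.2 hab with hm | hm
  exacts [⟨a, ha.1, ha.2, hm⟩, ⟨b, hb.1, hb.2, hm⟩]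

theorem IsColouringOn.exists_isMissingAt (h : IsColouringOn c U B) (hI : IsRainbow c I)
    (hI4 : 4 ≤ #I) (he : e ∈ edgesIn I) (heB : c e ∉ B) :
    ∃ a ∈ I, a ∉ e ∧ IsMissingAt c (c e) a :=
  (h.isNearlyMissing heB fun _ hf hfe => hI hf he hfe).exists_isMissingAt hI4 he

/-- A list of loans `(a, e)`: the edge from some new vertex to `a` borrows the colour of the edge
`e` inside `U`. The conditions keep the colouring proper. -/
structure IsLoan (c : Sym2 V → α) (U : Finset V) (L : List (V × Sym2 V)) : Prop where
  mem : ∀ q ∈ L, q.1 ∈ U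
  mem_edgesIn : ∀ q ∈ L, q.2 ∈ edgesIn U
  isMissingAt : ∀ q ∈ L, IsMissingAt c (c q.2) q.1
  pairwise : L.Pairwise fun q r => q.1 ≠ r.1 ∧ c q.2 ≠ c r.2

/-- The loans `L` create two edges of the same colour in the union of `I` and the new vertex,
unless there are two such edges inside `I` already. -/
def Settles (c : Sym2 V → α) (L : List (V × Sym2 V)) (I : Finset V) : Prop :=
  IsRainbow c I → ∃ q ∈ L, q.1 ∈ I ∧ ∃ f ∈ edgesIn I, c f = c q.2

theorem isLoan_nil : IsLoan c U [] := by constructor <;> simp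

theorem isLoan_cons {q : V × Sym2 V} {L : List (V × Sym2 V)} :
    IsLoan c U (q :: L) ↔ (q.1 ∈ U ∧ q.2 ∈ edgesIn U ∧ IsMissingAt c (c q.2) q.1 ∧
      ∀ r ∈ L, q.1 ≠ r.1 ∧ c q.2 ≠ c r.2) ∧ IsLoan c U L := by
  refine ⟨fun h => ?_, fun ⟨⟨h₁, h₂, h₃, h₄⟩, h⟩ => ⟨?_, ?_, ?_, ?_⟩⟩
  · have h₁ := List.forall_mem_cons.1 h.mem
    have h₂ := List.forall_mem_cons.1 h.mem_edgesIn
    have h₃ := List.forall_mem_cons.1 h.isMissingAt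
    have h₄ := List.pairwise_cons.1 h.pairwise
    exact ⟨⟨h₁.1, h₂.1, h₃.1, h₄.1⟩, h₁.2, h₂.2, h₃.2, h₄.2⟩
  · exact List.forall_mem_cons.2 ⟨h₁, h.mem⟩
  · exact List.forall_mem_cons.2 ⟨h₂, h.mem_edgesIn⟩
  · exact List.forall_mem_cons.2 ⟨h₃, h.isMissingAt⟩
  · exact List.pairwise_cons.2 ⟨h₄, h.pairwise⟩

theorem IsLoan.mono {L : List (V × Sym2 V)} (h : IsLoan c U L) (hU : U ⊆ U') : IsLoan c U' L :=
  ⟨fun q hq => hU (h.mem q hq), fun q hq => edgesIn_mono hU (h.mem_edgesIn q hq), h.isMissingAt,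
    h.pairwise⟩

theorem settles_of_not_isRainbow {L : List (V × Sym2 V)} (h : ¬ IsRainbow c I) : Settles c L I :=
  fun h' => absurd h' h

theorem settles_of_mem {L : List (V × Sym2 V)} (hL : (a, e) ∈ L) (ha : a ∈ I)
    (he : e ∈ edgesIn I) : Settles c L I :=
  fun _ => ⟨(a, e), hL, ha, e, he, rfl⟩

theorem Settles.not_isRainbow_insert {L : List (V × Sym2 V)} (h : Settles c L I) (hI : I ⊆ U)
    (hx : x ∉ U) (hold : ∀ e ∈ U.sym2, c' e = c e) (hnew : ∀ q ∈ L, c' s(x, q.1) = c q.2) :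
    ¬ IsRainbow c' (insert x I) := by
  intro hrainbow
  obtain ⟨q, hq, hqI, f, hf, hfq⟩ := h ((hrainbow.mono (subset_insert x I)).congr hI
    fun e he => (hold e he).symm)
  have hfU : f ∈ U.sym2 := sym2_mono hI (edgesIn_subset_sym2 hf)
  have hxq : x ≠ q.1 := fun heq => hx (heq ▸ hI hqI)
  have heq : s(x, q.1) = f :=
    hrainbow (mk_mem_edgesIn.2 ⟨⟨mem_insert_self x I, mem_insert_of_mem hqI⟩, hxq⟩)
      (edgesIn_mono (subset_insert x I) hf) ((hnew q hq).trans (hfq.symm.trans (hold f hfU).symm))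
  exact hx (mk_mem_sym2_iff.1 (heq ▸ hfU)).1

theorem IsColouringOn.exists_lend (h : IsColouringOn c U B) (hx : x ∉ U) {L : List (V × Sym2 V)}
    (hL : IsLoan c U L) :
    ∃ c' B', IsColouringOn c' (insert x U) B' ∧ #B' ≤ #B + L.length ∧ (∀ e ∈ U.sym2, c' e = c e) ∧
      ∀ q ∈ L, c' s(x, q.1) = c q.2 := by
  classical
  have hnotMem {a : V} : s(x, a) ∉ U.sym2 := fun hxa => hx (mk_mem_sym2_iff.1 hxa).1
  have hmem {q : V × Sym2 V} (hq : q ∈ L) : q.2 ∈ U.sym2 :=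
    edgesIn_subset_sym2 (hL.mem_edgesIn q hq)
  have hmissing {q : V × Sym2 V} (hq : q ∈ L) : IsMissingAt c (c q.2) x := fun e hxe he => by
    rw [← h.hasPrivateColour e (fun heU => hx (mem_sym2_iff.1 heU x hxe)) q.2 he.symm] at hxe
    exact hx (mem_sym2_iff.1 (hmem hq) x hxe)
  let B' := B ∪ (L.map fun q => c q.2).toFinset
  have hrecolour : ∀ q ∈ L, CanRecolour c (insert x U) B' s(x, q.1) q.2 := fun q hq =>
    { left_mem := mk_mem_sym2_iff.2 ⟨mem_insert_self x U, mem_insert_of_mem (hL.mem q hq)⟩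
      right_mem := sym2_mono (subset_insert x U) (hmem hq)
      isMissingAt := Sym2.ball.2 ⟨hmissing hq, hL.isMissingAt q hq⟩
      mem_or_hasPrivateColour := Or.inl (mem_union_right _ (List.mem_toFinset.2
        (List.mem_map_of_mem hq))) }
  obtain ⟨c', h', hnew, hold⟩ := (h.mono (subset_insert x U)
    (subset_union_left : B ⊆ B')).exists_recolouring (L.map fun q => (s(x, q.1), q.2))
    (List.forall_mem_map.2 hrecolour)
    (List.pairwise_map.2 (hL.pairwise.imp_of_mem fun hq hr hqr =>
      ⟨fun heq => hqr.1 (Sym2.congr_right.1 heq), fun heq => hnotMem (heq ▸ hmem hr), hqr.2⟩))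
  have hcard : #B' ≤ #B + L.length := (card_union_le _ _).trans (Nat.add_le_add_left
    ((List.toFinset_card_le _).trans_eq (List.length_map _)) _)
  exact ⟨c', B', h', hcard,
    fun e he => hold e (List.forall_mem_map.2 fun q _ heq => hnotMem (heq ▸ he)),
    List.forall_mem_map.1 hnew⟩

theorem IsColouringOn.exists_loan_one (h : IsColouringOn c U B) (hIU : I ⊆ U) (hI : 4 ≤ #I)
    (hB : #B ≤ 5) : ∃ L, IsLoan c U L ∧ L.length ≤ 1 ∧ Settles c L I := by
  by_cases hr : IsRainbow c I
  · obtain ⟨e, he, heB⟩ := hr.exists_colour_notMem hI hB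
    obtain ⟨a, ha, -, hmiss⟩ := h.exists_isMissingAt hr hI he heB
    exact ⟨[(a, e)], isLoan_cons.2 ⟨⟨hIU ha, edgesIn_mono hIU he, hmiss, by simp⟩, isLoan_nil⟩,
      le_rfl, settles_of_mem (by simp) ha he⟩
  · exact ⟨[], isLoan_nil, by simp, settles_of_not_isRainbow hr⟩

theorem IsColouringOn.exists_isMissingAt_ne (h : IsColouringOn c U B) (hI : IsRainbow c I)
    (hI4 : 4 ≤ #I) (hB : #B ≤ 2) (hm : IsMissingAt c (c e) a) :
    ∃ b ∈ I, ∃ f ∈ edgesIn I, a ≠ b ∧ c e ≠ c f ∧ IsMissingAt c (c f) b := by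
  classical
  by_cases haI : a ∈ I
  · obtain ⟨d, hd, had, hdB⟩ := h.isProper.exists_edge_colour_notMem haI (B := B) (by omega)
    have hf : s(a, d) ∈ edgesIn I := mk_mem_edgesIn.2 ⟨⟨haI, hd⟩, had⟩
    obtain ⟨b, hb, hbad, hmiss⟩ := h.exists_isMissingAt hI hI4 hf hdB
    exact ⟨b, hb, _, hf, fun hab => hbad (hab ▸ Sym2.mem_mk_left a d),
      (hm _ (Sym2.mem_mk_left a d)).symm, hmiss⟩
  · obtain ⟨f, hf, hfB⟩ := hI.exists_colour_notMem hI4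
      ((card_insert_le (c e) B).trans (by omega))
    rw [mem_insert, not_or] at hfB
    obtain ⟨b, hb, -, hmiss⟩ := h.exists_isMissingAt hI hI4 hf hfB.2
    exact ⟨b, hb, f, hf, fun hab => haI (hab ▸ hb), Ne.symm hfB.1, hmiss⟩

theorem IsColouringOn.exists_loan_two (h : IsColouringOn c U B) (hIU : I ⊆ U) (hJU : J ⊆ U)
    (hI : 4 ≤ #I) (hJ : 4 ≤ #J) (hB : #B ≤ 2) :
    ∃ L, IsLoan c U L ∧ L.length ≤ 2 ∧ Settles c L I ∧ Settles c L J := by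
  by_cases hrI : IsRainbow c I
  swap
  · obtain ⟨L, hL, hlen, hset⟩ := h.exists_loan_one hJU hJ (by omega)
    exact ⟨L, hL, by omega, settles_of_not_isRainbow hrI, hset⟩
  by_cases hrJ : IsRainbow c J
  swap
  · obtain ⟨L, hL, hlen, hset⟩ := h.exists_loan_one hIU hI (by omega)
    exact ⟨L, hL, by omega, hset, settles_of_not_isRainbow hrJ⟩
  obtain ⟨e, he, heB⟩ := hrI.exists_colour_notMem hI (by omega : #B ≤ 5)
  obtain ⟨a, ha, -, hma⟩ := h.exists_isMissingAt hrI hI he heB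
  obtain ⟨b, hb, f, hf, hab, hef, hmb⟩ := h.exists_isMissingAt_ne hrJ hJ hB hma
  refine ⟨[(a, e), (b, f)], ?_, le_rfl, settles_of_mem (by simp) ha he,
    settles_of_mem (by simp) hb hf⟩
  simp only [isLoan_cons, List.forall_mem_singleton]
  exact ⟨⟨hIU ha, edgesIn_mono hIU he, hma, hab, hef⟩,
    ⟨hJU hb, edgesIn_mono hJU hf, hmb, by simp⟩, isLoan_nil⟩

theorem settles_erase_of_mem {L : List (V × Sym2 V)} (hL : (a, e) ∈ L) (ha : a ∈ C)
    (he : e ∈ edgesIn C) (hva : v ≠ a) (hve : v ∉ e) : Settles c L (C.erase v) :=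
  settles_of_mem hL (mem_erase.2 ⟨hva.symm, ha⟩) (mem_edgesIn_erase he hve)

theorem IsProper.exists_loan_pair (h : IsProper c) {y z : V} (ho : o ∈ C) (hy : y ∈ C)
    (hz : z ∈ C) (ha : a ∈ C) (hb : b ∈ C) (hoy : o ≠ y) (hoz : o ≠ z) (hyz : y ≠ z) (hyb : y ≠ b)
    (haz : a ≠ z) (hab : a ≠ b) (hma : IsMissingAt c (c s(o, y)) a)
    (hmb : IsMissingAt c (c s(o, z)) b) :
    ∃ L, IsLoan c C L ∧ L.length ≤ 2 ∧ ∀ v ≠ o, Settles c L (C.erase v) := by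
  have hoy' : s(o, y) ∈ edgesIn C := mk_mem_edgesIn.2 ⟨⟨ho, hy⟩, hoy⟩
  have hoz' : s(o, z) ∈ edgesIn C := mk_mem_edgesIn.2 ⟨⟨ho, hz⟩, hoz⟩
  have hne : c s(o, y) ≠ c s(o, z) := fun heq =>
    hyz (Sym2.congr_right.1 (h o (Sym2.mem_mk_left o y) (Sym2.mem_mk_left o z) heq))
  refine ⟨[(a, s(o, y)), (b, s(o, z))], ?_, le_rfl, fun v hv => ?_⟩
  · simp only [isLoan_cons, List.forall_mem_singleton]
    exact ⟨⟨ha, hoy', hma, hab, hne⟩, ⟨hb, hoz', hmb, by simp⟩, isLoan_nil⟩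
  · by_cases hv' : v = y ∨ v = a
    · exact settles_erase_of_mem (e := s(o, z)) (a := b) (by simp) hb hoz' (by grind) (by grind)
    · exact settles_erase_of_mem (e := s(o, y)) (a := a) (by simp) ha hoy' (by grind) (by grind)

theorem IsProper.exists_loan_triangle (h : IsProper c) {y₁ y₂ y₃ : V} (ho : o ∈ C) (hy₁ : y₁ ∈ C)
    (hy₂ : y₂ ∈ C) (hy₃ : y₃ ∈ C) (hd : [o, y₁, y₂, y₃].Nodup)
    (hm₁ : IsMissingAt c (c s(o, y₁)) y₂) (hm₂ : IsMissingAt c (c s(o, y₂)) y₃)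
    (hm₃ : IsMissingAt c (c s(o, y₃)) y₁) :
    ∃ L, IsLoan c C L ∧ L.length ≤ 3 ∧ ∀ v ≠ o, Settles c L (C.erase v) := by
  simp only [List.nodup_cons, List.mem_cons, List.not_mem_nil, not_or] at hd
  have hmem {y : V} (hy : y ∈ C) (hoy : o ≠ y) : s(o, y) ∈ edgesIn C :=
    mk_mem_edgesIn.2 ⟨⟨ho, hy⟩, hoy⟩
  have hne {y z : V} (hyz : y ≠ z) : c s(o, y) ≠ c s(o, z) := fun heq =>
    hyz (Sym2.congr_right.1 (h o (Sym2.mem_mk_left o y) (Sym2.mem_mk_left o z) heq))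
  refine ⟨[(y₂, s(o, y₁)), (y₃, s(o, y₂)), (y₁, s(o, y₃))], ?_, le_rfl, fun v hv => ?_⟩
  · simp only [isLoan_cons, List.forall_mem_cons]
    exact ⟨⟨hy₂, hmem hy₁ (by grind), hm₁, ⟨by grind, hne (by grind)⟩, ⟨by grind, hne (by grind)⟩,
      by simp⟩, ⟨hy₃, hmem hy₂ (by grind), hm₂, ⟨by grind, hne (by grind)⟩, by simp⟩,
      ⟨hy₁, hmem hy₃ (by grind), hm₃, by simp⟩, isLoan_nil⟩
  · by_cases hv₁ : v = y₁
    · exact settles_erase_of_mem (e := s(o, y₂)) (a := y₃) (by simp) hy₃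
        (hmem hy₂ (by grind)) (by grind) (by grind)
    by_cases hv₂ : v = y₂
    · exact settles_erase_of_mem (e := s(o, y₃)) (a := y₁) (by simp) hy₁
        (hmem hy₃ (by grind)) (by grind) (by grind)
    · exact settles_erase_of_mem (e := s(o, y₁)) (a := y₂) (by simp) hy₂
        (hmem hy₁ (by grind)) (by grind) (by grind)

theorem IsProper.exists_loan_of_not_isMissingAt (h : IsProper c) {y₁ y₂ y₃ t : V} (ho : o ∈ C)
    (hy₁ : y₁ ∈ C) (hy₂ : y₂ ∈ C) (hy₃ : y₃ ∈ C) (ht : t ∈ C) (hd : [o, y₁, y₂, y₃, t].Nodup)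
    (hn₁ : IsNearlyMissing c C s(o, y₁)) (hn₂ : IsNearlyMissing c C s(o, y₂))
    (hm : ¬ IsMissingAt c (c s(o, y₁)) y₂) :
    ∃ L, IsLoan c C L ∧ L.length ≤ 2 ∧ ∀ v ≠ o, Settles c L (C.erase v) := by
  simp only [List.nodup_cons, List.mem_cons, List.not_mem_nil, not_or] at hd
  have hm₁ {x : V} (hx : x ∈ C) (hxe : x ∉ s(o, y₁)) (hx₂ : y₂ ≠ x) :
      IsMissingAt c (c s(o, y₁)) x :=
    (hn₁ y₂ hy₂ x hx (by grind) hxe hx₂).resolve_left hm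
  rcases hn₂ y₃ hy₃ t ht (by grind) (by grind) (by grind) with hm₂ | hm₂
  · exact h.exists_loan_pair ho hy₁ hy₂ ht hy₃ (by grind) (by grind) (by grind) (by grind)
      (by grind) (by grind) (hm₁ ht (by grind) (by grind)) hm₂
  · exact h.exists_loan_pair ho hy₁ hy₂ hy₃ ht (by grind) (by grind) (by grind) (by grind)
      (by grind) (by grind) (hm₁ hy₃ (by grind) (by grind)) hm₂

theorem IsProper.exists_loan_of_isNearlyMissing (h : IsProper c) {y₁ y₂ y₃ t : V} (ho : o ∈ C)
    (hy₁ : y₁ ∈ C) (hy₂ : y₂ ∈ C) (hy₃ : y₃ ∈ C) (ht : t ∈ C) (hd : [o, y₁, y₂, y₃, t].Nodup)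
    (hn₁ : IsNearlyMissing c C s(o, y₁)) (hn₂ : IsNearlyMissing c C s(o, y₂))
    (hn₃ : IsNearlyMissing c C s(o, y₃)) :
    ∃ L, IsLoan c C L ∧ L.length ≤ 3 ∧ ∀ v ≠ o, Settles c L (C.erase v) := by
  have hd₂ : [o, y₂, y₃, y₁, t].Nodup := by
    simp only [List.nodup_cons, List.mem_cons, List.not_mem_nil, not_or] at hd ⊢
    grind
  have hd₃ : [o, y₃, y₁, y₂, t].Nodup := by
    simp only [List.nodup_cons, List.mem_cons, List.not_mem_nil, not_or] at hd ⊢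
    grind
  have hbroken {z₁ z₂ z₃ : V} (hz₁ : z₁ ∈ C) (hz₂ : z₂ ∈ C) (hz₃ : z₃ ∈ C)
      (hd : [o, z₁, z₂, z₃, t].Nodup) (hn₁ : IsNearlyMissing c C s(o, z₁))
      (hn₂ : IsNearlyMissing c C s(o, z₂)) (hm : ¬ IsMissingAt c (c s(o, z₁)) z₂) :
      ∃ L, IsLoan c C L ∧ L.length ≤ 3 ∧ ∀ v ≠ o, Settles c L (C.erase v) := by
    obtain ⟨L, hL, hlen, hset⟩ :=
      h.exists_loan_of_not_isMissingAt ho hz₁ hz₂ hz₃ ht hd hn₁ hn₂ hm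
    exact ⟨L, hL, by omega, hset⟩
  by_cases hm₁ : IsMissingAt c (c s(o, y₁)) y₂
  swap
  · exact hbroken hy₁ hy₂ hy₃ hd hn₁ hn₂ hm₁
  by_cases hm₂ : IsMissingAt c (c s(o, y₂)) y₃
  swap
  · exact hbroken hy₂ hy₃ hy₁ hd₂ hn₂ hn₃ hm₂
  by_cases hm₃ : IsMissingAt c (c s(o, y₃)) y₁
  swap
  · exact hbroken hy₃ hy₁ hy₂ hd₃ hn₃ hn₁ hm₃
  exact h.exists_loan_triangle ho hy₁ hy₂ hy₃
    (hd.sublist (by simp)) hm₁ hm₂ hm₃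

theorem IsProper.card_toFinset_union (h : IsProper c) (he : e ∈ edgesIn C) (hf : f ∈ edgesIn C)
    (heq : c e = c f) (hne : e ≠ f) : #(e.toFinset ∪ f.toFinset) = 4 := by
  have hdisj : Disjoint e.toFinset f.toFinset := disjoint_left.2 fun x hxe hxf =>
    h.notMem_of_eq hne heq (Sym2.mem_toFinset.1 hxe) (Sym2.mem_toFinset.1 hxf)
  rw [card_union_of_disjoint hdisj, Sym2.card_toFinset_of_not_isDiag e (mem_edgesIn.1 he).2,
    Sym2.card_toFinset_of_not_isDiag f (mem_edgesIn.1 hf).2]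

theorem not_isRainbow_erase (he : e ∈ edgesIn C) (hf : f ∈ edgesIn C) (heq : c e = c f)
    (hne : e ≠ f) (hoe : o ∉ e) (hof : o ∉ f) : ¬ IsRainbow c (C.erase o) :=
  not_isRainbow_iff.2 ⟨e, mem_edgesIn_erase he hoe, f, mem_edgesIn_erase hf hof, heq, hne⟩

theorem IsColouringOn.exists_loan_of_notMem (h : IsColouringOn c U B) (he : e ∈ edgesIn C)
    (hf : f ∈ edgesIn C) (heq : c e = c f) (hne : e ≠ f) (heB : c e ∉ B) (ho : o ∈ C)
    (hoe : o ∉ e) (hof : o ∉ f) :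
    ∃ L, IsLoan c C L ∧ L.length ≤ 1 ∧ ∀ v, Settles c L (C.erase v) := by
  have hm : IsMissingAt c (c e) o := h.isMissingAt_of_eq hne heq heB hoe hof
  refine ⟨[(o, e)], isLoan_cons.2 ⟨⟨ho, he, hm, by simp⟩, isLoan_nil⟩, le_rfl, fun v => ?_⟩
  rcases eq_or_ne v o with rfl | hvo
  · exact settles_of_not_isRainbow (not_isRainbow_erase he hf heq hne hoe hof)
  by_cases hve : v ∈ e
  · exact fun _ => ⟨(o, e), by simp, mem_erase.2 ⟨hvo.symm, ho⟩, f,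
      mem_edgesIn_erase hf (h.isProper.notMem_of_eq hne heq hve), heq.symm⟩
  · exact settles_erase_of_mem (by simp) ho he hvo hve

theorem IsProper.exists_forall_ne_notMem (h : IsProper c) (heq : c e = c f) (heB : c e ∈ B)
    (hoe : o ∉ e) (hof : o ∉ f) (hB : #B ≤ 2) :
    ∃ t ∈ e.toFinset ∪ f.toFinset, ∀ y ∈ e.toFinset ∪ f.toFinset, y ≠ t → c s(o, y) ∉ B := by
  classical
  have hspoke {y : V} (hy : y ∈ e.toFinset ∪ f.toFinset) : c s(o, y) ≠ c e := by
    rcases mem_union.1 hy with hy | hy <;> rw [Sym2.mem_toFinset] at hy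
    · exact fun h' => h.notMem_of_eq (by grind) h' (Sym2.mem_mk_right o y) hy
    · exact fun h' => h.notMem_of_eq (by grind) (h'.trans heq) (Sym2.mem_mk_right o y) hy
  have hcard : #(B.erase (c e)) ≤ 1 := by
    rw [card_erase_of_mem heB]
    omega
  have hunique {y z : V} (hy : y ∈ e.toFinset ∪ f.toFinset) (hz : z ∈ e.toFinset ∪ f.toFinset)
      (hyB : c s(o, y) ∈ B) (hzB : c s(o, z) ∈ B) : y = z :=
    Sym2.congr_right.1 (h o (Sym2.mem_mk_left o y) (Sym2.mem_mk_left o z)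
      (card_le_one.1 hcard _ (mem_erase.2 ⟨hspoke hy, hyB⟩) _ (mem_erase.2 ⟨hspoke hz, hzB⟩)))
  by_cases hex : ∃ t ∈ e.toFinset ∪ f.toFinset, c s(o, t) ∈ B
  · obtain ⟨t, ht, htB⟩ := hex
    exact ⟨t, ht, fun y hy hyt hyB => hyt (hunique hy ht hyB htB)⟩
  · push Not at hex
    obtain ⟨t, ht⟩ : ∃ t, t ∈ e := ⟨_, e.out_fst_mem⟩
    exact ⟨t, mem_union_left _ (Sym2.mem_toFinset.2 ht), fun y hy _ => hex y hy⟩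

-- Since `e` and `f` avoid `o`, only the sets `C.erase v` with `v ≠ o` matter. At least three of
-- the spokes from `o` to the four ends of `e` and `f` have colours outside `B`, which can be lent.
theorem IsColouringOn.exists_loan_of_mem (h : IsColouringOn c U B) (he : e ∈ edgesIn C)
    (hf : f ∈ edgesIn C) (heq : c e = c f) (hne : e ≠ f) (heB : c e ∈ B) (hB : #B ≤ 2)
    (hrep : ∀ g ∈ edgesIn C, ∀ g' ∈ edgesIn C, c g = c g' → g ≠ g' → c g ∈ B) (ho : o ∈ C)
    (hoe : o ∉ e) (hof : o ∉ f) :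
    ∃ L, IsLoan c C L ∧ L.length ≤ 3 ∧ ∀ v, Settles c L (C.erase v) := by
  obtain ⟨t, ht, hT⟩ := h.isProper.exists_forall_ne_notMem heq heB hoe hof hB
  obtain ⟨y₁, y₂, y₃, h₁₂, h₁₃, h₂₃, hyT⟩ := card_eq_three.1
    (show #((e.toFinset ∪ f.toFinset).erase t) = 3 by
      rw [card_erase_of_mem ht, h.isProper.card_toFinset_union he hf heq hne])
  have hTC {y : V} (hy : y ∈ e.toFinset ∪ f.toFinset) : y ∈ C := by
    rcases mem_union.1 hy with hy | hy
    · exact (mem_edgesIn.1 he).1 y (Sym2.mem_toFinset.1 hy)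
    · exact (mem_edgesIn.1 hf).1 y (Sym2.mem_toFinset.1 hy)
  have hoT : o ∉ e.toFinset ∪ f.toFinset := by simp [hoe, hof]
  have hot : o ≠ t := fun hot => hoT (hot ▸ ht)
  have hy {y : V} (hy : y ∈ ({y₁, y₂, y₃} : Finset V)) :
      y ∈ C ∧ y ≠ t ∧ o ≠ y ∧ IsNearlyMissing c C s(o, y) := by
    obtain ⟨hyt, hyT⟩ := mem_erase.1 (hyT ▸ hy)
    have hoy : o ≠ y := fun hoy => hoT (hoy ▸ hyT)
    refine ⟨hTC hyT, hyt, hoy, h.isNearlyMissing (hT y hyT hyt) fun g hg hgy => ?_⟩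
    by_contra hne
    exact hT y hyT hyt (hgy ▸ hrep g hg _ (mk_mem_edgesIn.2 ⟨⟨ho, hTC hyT⟩, hoy⟩) hgy hne)
  obtain ⟨hy₁, ht₁, ho₁, hn₁⟩ := hy (y := y₁) (by simp)
  obtain ⟨hy₂, ht₂, ho₂, hn₂⟩ := hy (y := y₂) (by simp)
  obtain ⟨hy₃, ht₃, ho₃, hn₃⟩ := hy (y := y₃) (by simp)
  obtain ⟨L, hL, hlen, hset⟩ := h.isProper.exists_loan_of_isNearlyMissing ho hy₁ hy₂ hy₃ (hTC ht)
    (by simp [ho₁, ho₂, ho₃, hot, h₁₂, h₁₃, h₂₃, ht₁, ht₂, ht₃]) hn₁ hn₂ hn₃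
  refine ⟨L, hL, hlen, fun v => ?_⟩
  rcases eq_or_ne v o with rfl | hvo
  · exact settles_of_not_isRainbow (not_isRainbow_erase he hf heq hne hoe hof)
  · exact hset v hvo

theorem IsColouringOn.exists_loan_erase (h : IsColouringOn c U B) (hC : 5 ≤ #C)
    (hr : ¬ IsRainbow c C) (hB : #B ≤ 2) :
    ∃ L, IsLoan c C L ∧ (L.length ≤ 1 ∨ L.length ≤ 3 ∧ 1 ≤ #B) ∧ ∀ v, Settles c L (C.erase v) := by
  have houtside {e f : Sym2 V} (he : e ∈ edgesIn C) (hf : f ∈ edgesIn C) (heq : c e = c f)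
      (hne : e ≠ f) : ∃ o ∈ C, o ∉ e ∧ o ∉ f := by
    obtain ⟨o, ho, hoT⟩ := exists_mem_notMem_of_card_lt_card
      (show #(e.toFinset ∪ f.toFinset) < #C by
        rw [h.isProper.card_toFinset_union he hf heq hne]
        omega)
    exact ⟨o, ho, by simpa using hoT⟩
  by_cases hrep : ∀ g ∈ edgesIn C, ∀ g' ∈ edgesIn C, c g = c g' → g ≠ g' → c g ∈ B
  · obtain ⟨e, he, f, hf, heq, hne⟩ := not_isRainbow_iff.1 hr
    have heB := hrep e he f hf heq hne
    obtain ⟨o, ho, hoe, hof⟩ := houtside he hf heq hne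
    obtain ⟨L, hL, hlen, hset⟩ := h.exists_loan_of_mem he hf heq hne heB hB hrep ho hoe hof
    exact ⟨L, hL, Or.inr ⟨hlen, card_pos.2 ⟨_, heB⟩⟩, hset⟩
  · push Not at hrep
    obtain ⟨e, he, f, hf, heq, hne, heB⟩ := hrep
    obtain ⟨o, ho, hoe, hof⟩ := houtside he hf heq hne
    obtain ⟨L, hL, hlen, hset⟩ := h.exists_loan_of_notMem he hf heq hne heB ho hoe hof
    exact ⟨L, hL, Or.inl hlen, hset⟩

end Colouring

section Counting

variable {V : Type*} {G G' : SimpleGraph V} {k m : ℕ} {N S U W : Finset V} {w x : V}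

open Classical in
/-- The number of neighbours of `x` in `U`. -/
noncomputable def degIn (G : SimpleGraph V) (U : Finset V) (x : V) : ℕ := #{w ∈ U | G.Adj x w}

/-- The number of pairs in `A × U` that are adjacent in `G`. An edge inside `A ∩ U` is counted
twice. -/
noncomputable def adjPairs (G : SimpleGraph V) (A U : Finset V) : ℕ := ∑ a ∈ A, degIn G U a

/-- The amount `(k + 1) |U| - 2 e(U)` by which the density of `G` on `U` falls short of
`(k + 1) / 2`. -/
noncomputable def slack (G : SimpleGraph V) (k : ℕ) (U : Finset V) : ℤ :=
  (k + 1) * #U - adjPairs G U U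

/-- The maximum density of `G` is less than `(k + 1) / 2`. -/
def IsSparse (G : SimpleGraph V) (k : ℕ) : Prop := ∀ W : Finset V, W.Nonempty → 0 < slack G k W

theorem card_le_degIn (hS : S ⊆ U) (h : ∀ w ∈ S, G.Adj x w) : #S ≤ degIn G U x := by
  classical exact card_le_card fun w hw => mem_filter.2 ⟨hS hw, h w hw⟩

theorem adjPairs_comm (A U : Finset V) : adjPairs G A U = adjPairs G U A := by
  classical
  have := sum_card_bipartiteAbove_eq_sum_card_bipartiteBelow (s := A) (t := U) G.Adj
  simpa only [adjPairs, degIn, bipartiteAbove, bipartiteBelow, G.adj_comm] using this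

theorem mul_card_le_adjPairs (hS : S ⊆ U) (h : ∀ n ∈ N, ∀ w ∈ S, G.Adj n w) :
    #N * #S ≤ adjPairs G N U := by
  rw [← smul_eq_mul]
  exact card_nsmul_le_sum _ _ _ fun n hn => card_le_degIn hS (h n hn)

theorem mul_card_add_degIn_le_adjPairs (hS : S ⊆ U) (hw : w ∈ U) (hwS : w ∉ S)
    (h : ∀ n ∈ N, ∀ w ∈ S, G.Adj n w) : #N * #S + degIn G N w ≤ adjPairs G N U := by
  classical
  calc #N * #S + degIn G N w ≤ adjPairs G S N + degIn G N w := by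
        rw [mul_comm]
        gcongr
        exact mul_card_le_adjPairs subset_rfl fun v hv n hn => (h n hn v hv).symm
    _ = ∑ v ∈ insert w S, degIn G N v := by rw [sum_insert hwS, adjPairs, add_comm]
    _ ≤ adjPairs G U N := sum_le_sum_of_subset (insert_subset hw hS)
    _ = adjPairs G N U := adjPairs_comm U N

theorem degIn_eq_of_isNClique (h : G.IsNClique m N) (hx : x ∈ N) : degIn G N x = m - 1 := by
  classical
  rw [degIn, ← h.card_eq, ← card_erase_of_mem hx]
  congr 1
  ext b
  rw [mem_filter, mem_erase]
  exact ⟨fun hb => ⟨hb.2.ne', hb.1⟩, fun hb => ⟨hb.2, h.isClique hx hb.2 hb.1.symm⟩⟩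

theorem adjPairs_self_of_isNClique (h : G.IsNClique m N) : (adjPairs G N N : ℤ) = m * (m - 1) := by
  rw [adjPairs, sum_const_nat fun a => degIn_eq_of_isNClique h, h.card_eq]
  cases m <;> simp

theorem slack_of_isNClique (h : G.IsNClique k N) : slack G k N = 2 * k := by
  rw [slack, adjPairs_self_of_isNClique h, h.card_eq]
  ring

theorem slack_anti (h : G' ≤ G) : slack G k U ≤ slack G' k U := by
  classical
  have hdeg (a : V) : degIn G' U a ≤ degIn G U a :=
    card_le_card (monotone_filter_right U fun _ _ hw => h hw)
  have hadj : adjPairs G' U U ≤ adjPairs G U U := sum_le_sum fun a _ => hdeg a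
  rw [slack, slack]
  gcongr

theorem IsSparse.mono (hG : IsSparse G k) (h : G' ≤ G) : IsSparse G' k :=
  fun W hW => (hG W hW).trans_le (slack_anti h)

theorem two_mul_ncard_edgeSet_induce [Finite V] (U : Finset V) :
    2 * ((⊤ : G.Subgraph).induce (U : Set V)).edgeSet.ncard = adjPairs G U U := by
  classical
  have := Fintype.ofFinite V
  let J := (⊤ : G.Subgraph).induce (U : Set V)
  have hedges : J.edgeSet.ncard = #J.spanningCoe.edgeFinset := by
    rw [Set.ncard_eq_toFinset_card', SimpleGraph.edgeFinset]
    congr 1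
    ext e
    simp
  have hdegree (a : V) : J.spanningCoe.degree a = if a ∈ U then degIn G U a else 0 := by
    rw [← SimpleGraph.card_neighborFinset_eq_degree]
    split_ifs with ha
    · rw [degIn]
      congr 1
      ext b
      simp [J, ha]
    · rw [card_eq_zero]
      ext b
      simp [J, ha]
  rw [hedges, ← SimpleGraph.sum_degrees_eq_twice_card_edges, sum_congr rfl fun a _ => hdegree a,
    adjPairs, sum_ite_mem, univ_inter]

theorem isSparse_of_forall_subgraph [Finite V] (hm : ∀ J : G.Subgraph, J.verts.Nonempty →
    (J.edgeSet.ncard : ℝ) / (J.verts.ncard : ℝ) < ((k : ℝ) + 1) / 2) : IsSparse G k := by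
  intro W hW
  have hdens := hm ((⊤ : G.Subgraph).induce (W : Set V)) (by simpa using hW)
  have hverts : ((⊤ : G.Subgraph).induce (W : Set V)).verts.ncard = #W := by simp
  have hpos : (0 : ℝ) < #W := by exact_mod_cast card_pos.2 hW
  rw [hverts, div_lt_div_iff₀ hpos two_pos, mul_comm _ (2 : ℝ)] at hdens
  rw [slack, ← two_mul_ncard_edgeSet_induce, sub_pos]
  exact_mod_cast hdens

variable [DecidableEq V]

theorem degIn_union (h : Disjoint U N) (x : V) :
    degIn G (U ∪ N) x = degIn G U x + degIn G N x := by
  classical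
  rw [degIn, filter_union, card_union_of_disjoint (disjoint_filter_filter h)]
  rfl

theorem slack_union (h : Disjoint U N) :
    slack G k (U ∪ N) = slack G k U + (k + 1) * #N - adjPairs G N N - 2 * adjPairs G N U := by
  have hadj : adjPairs G (U ∪ N) (U ∪ N) =
      adjPairs G U U + adjPairs G U N + (adjPairs G N U + adjPairs G N N) := by
    rw [adjPairs, sum_union h]
    simp only [degIn_union h, sum_add_distrib]
    rfl
  rw [slack, slack, card_union_of_disjoint h, hadj, adjPairs_comm U N]
  push_cast
  ring

theorem slack_insert (h : x ∉ U) :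
    slack G k (insert x U) = slack G k U + (k + 1) - 2 * degIn G U x := by
  rw [insert_eq, union_comm, slack_union (disjoint_singleton_right.2 h)]
  simp [adjPairs, degIn, filter_singleton]

theorem slack_union_of_isNClique {K : Finset V} (hK : G.IsNClique k K) :
    slack G k (U ∪ K) =
      slack G k U + #(K \ U) * (#(K ∩ U) + 2) - 2 * adjPairs G (K \ U) U := by
  have hN : G.IsNClique #(K \ U) (K \ U) := ⟨hK.isClique.subset (coe_subset.2 sdiff_subset), rfl⟩
  have hcard : (#(K \ U) : ℤ) + #(K ∩ U) = k := by
    exact_mod_cast (card_sdiff_add_card_inter K U).trans hK.card_eq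
  rw [← union_sdiff_self_eq_union, slack_union disjoint_sdiff, adjPairs_self_of_isNClique hN,
    ← hcard]
  ring

end Counting

section Stage

variable {V α : Type*} {G : SimpleGraph V} {k : ℕ} {c : Sym2 V → α} {B : Finset α}
  {U U' I J : Finset V} {w x y : V}

/-- `I` is a clique in `U` that together with the vertex `x` forms a `k`-clique. -/
structure IsAttached (G : SimpleGraph V) (k : ℕ) (U : Finset V) (x : V) (I : Finset V) : Prop where
  subset : I ⊆ U
  isNClique : G.IsNClique (k - 1) I
  adj : ∀ y ∈ I, G.Adj x y

open Classical in
/-- The union of the cliques of `U` attached to `x`. -/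
noncomputable def reach (G : SimpleGraph V) (k : ℕ) (U : Finset V) (x : V) : Finset V :=
  {w ∈ U | ∃ I, IsAttached G k U x I ∧ w ∈ I}

theorem mem_reach : w ∈ reach G k U x ↔ ∃ I, IsAttached G k U x I ∧ w ∈ I := by
  classical
  rw [reach, mem_filter]
  exact ⟨fun h => h.2, fun ⟨I, h, hw⟩ => ⟨h.subset hw, I, h, hw⟩⟩

theorem IsAttached.subset_reach (h : IsAttached G k U x I) : I ⊆ reach G k U x :=
  fun _ hw => mem_reach.2 ⟨I, h, hw⟩

theorem IsAttached.le_card_reach (h : IsAttached G k U x I) : k - 1 ≤ #(reach G k U x) :=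
  h.isNClique.card_eq ▸ card_le_card h.subset_reach

theorem reach_subset : reach G k U x ⊆ U := by
  classical exact filter_subset _ _

theorem card_reach_le_degIn : #(reach G k U x) ≤ degIn G U x :=
  card_le_degIn reach_subset fun w hw => by
    obtain ⟨I, h, hwI⟩ := mem_reach.1 hw
    exact h.adj w hwI

variable [DecidableEq V]

theorem isAttached_erase {K : Finset V} (hK : G.IsNClique k K) (hx : x ∈ K)
    (hKU : K ⊆ insert x U) : IsAttached G k U x (K.erase x) where
  subset := subset_insert_iff.1 hKU
  isNClique := ⟨hK.isClique.subset (coe_subset.2 (erase_subset _ _)),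
    (card_erase_of_mem hx).trans (congrArg (· - 1) hK.card_eq)⟩
  adj _ hy := hK.isClique hx (mem_of_mem_erase hy) (ne_of_mem_erase hy).symm

theorem IsAttached.isNClique_insert (h : IsAttached G k U x I) (hk : 1 ≤ k) :
    G.IsNClique k (insert x I) :=
  Nat.sub_add_cancel hk ▸ h.isNClique.insert h.adj

theorem IsAttached.exists_eq_erase (h : IsAttached G k U x I) (hr : #(reach G k U x) = k)
    (hk : 1 ≤ k) : ∃ v, I = (reach G k U x).erase v := by
  obtain ⟨v, hv, hins⟩ := exists_eq_insert_iff.2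
    ⟨h.subset_reach, (by rw [h.isNClique.card_eq, hr, Nat.sub_add_cancel hk])⟩
  exact ⟨v, by rw [← hins, erase_insert hv]⟩

/-- A colouring of the edges inside `U` in which no `k`-clique of `G` inside `U` is rainbow. -/
structure IsGoodColouring (G : SimpleGraph V) (k : ℕ) (c : Sym2 V → α) (U : Finset V)
    (B : Finset α) : Prop extends IsColouringOn c U B where
  not_isRainbow : ∀ K ⊆ U, G.IsNClique k K → ¬ IsRainbow c K

theorem IsGoodColouring.exists_lend (h : IsGoodColouring G k c U B) (hx : x ∉ U)
    {L : List (V × Sym2 V)} (hL : IsLoan c U L)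
    (hset : ∀ I, IsAttached G k U x I → Settles c L I) :
    ∃ (c' : Sym2 V → α) (B' : Finset α), IsGoodColouring G k c' (insert x U) B' ∧
      #B' ≤ #B + L.length := by
  obtain ⟨c', B', h', hcard, hold, hnew⟩ := h.toIsColouringOn.exists_lend hx hL
  refine ⟨c', B', ⟨h', fun K hKU hK => ?_⟩, hcard⟩
  by_cases hxK : x ∈ K
  · have hat := isAttached_erase hK hxK hKU
    rw [← insert_erase hxK]
    exact (hset _ hat).not_isRainbow_insert hat.subset hx hold hnew
  · have hKU' := (subset_insert_iff_of_notMem hxK).1 hKU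
    exact fun hr => h.not_isRainbow K hKU' hK (hr.congr hKU' fun e he => (hold e he).symm)

theorem IsGoodColouring.exists_loan_of_not_isClique (h : IsGoodColouring G k c U B) (hk : 5 ≤ k)
    (hr : #(reach G k U x) = k) (hcl : ¬ G.IsClique (reach G k U x)) (hB : #B ≤ 2) :
    ∃ L, IsLoan c U L ∧ L.length ≤ 2 ∧ ∀ I, IsAttached G k U x I → Settles c L I := by
  obtain ⟨u, hu, v, hv, huv, hadj⟩ : ∃ u ∈ reach G k U x, ∃ v ∈ reach G k U x,
      u ≠ v ∧ ¬ G.Adj u v := by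
    simpa only [SimpleGraph.isClique_iff, Set.Pairwise, mem_coe, not_forall, exists_prop]
      using hcl
  have hcard {w : V} (hw : w ∈ reach G k U x) : 4 ≤ #((reach G k U x).erase w) := by
    rw [card_erase_of_mem hw]
    omega
  obtain ⟨L, hL, hlen, hsetu, hsetv⟩ := h.exists_loan_two
    ((erase_subset u _).trans reach_subset) ((erase_subset v _).trans reach_subset)
    (hcard hu) (hcard hv) hB
  refine ⟨L, hL, hlen, fun I hI => ?_⟩
  obtain ⟨w, rfl⟩ := hI.exists_eq_erase hr (by omega)
  by_cases hwu : w = u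
  · rwa [hwu]
  by_cases hwv : w = v
  · rwa [hwv]
  exact absurd (hI.isNClique.isClique (mem_coe.2 (mem_erase.2 ⟨Ne.symm hwu, hu⟩))
    (mem_coe.2 (mem_erase.2 ⟨Ne.symm hwv, hv⟩)) huv) hadj

theorem IsGoodColouring.exists_loan (h : IsGoodColouring G k c U B) (hk : 5 ≤ k)
    (hI : IsAttached G k U x I) (hle : #(reach G k U x) ≤ k) (hB : #B ≤ 5)
    (hB' : #(reach G k U x) = k → #B ≤ 2) :
    ∃ L, IsLoan c U L ∧ (∀ J, IsAttached G k U x J → Settles c L J) ∧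
      (L.length ≤ 1 ∨ #(reach G k U x) = k ∧ (L.length ≤ 2 ∨ L.length ≤ 3 ∧ 1 ≤ #B)) := by
  have hreach := hI.le_card_reach
  by_cases hr : #(reach G k U x) = k
  · by_cases hcl : G.IsClique (reach G k U x)
    · obtain ⟨L, hL, hlen, hset⟩ := h.exists_loan_erase (C := reach G k U x) (by omega)
        (h.not_isRainbow _ reach_subset ⟨hcl, hr⟩) (hB' hr)
      refine ⟨L, hL.mono reach_subset, fun J hJ => ?_, by omega⟩
      obtain ⟨v, rfl⟩ := hJ.exists_eq_erase hr (by omega)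
      exact hset v
    · obtain ⟨L, hL, hlen, hset⟩ := h.exists_loan_of_not_isClique hk hr hcl (hB' hr)
      exact ⟨L, hL, hset, Or.inr ⟨hr, Or.inl hlen⟩⟩
  · obtain ⟨L, hL, hlen, hset⟩ := h.exists_loan_one (I := reach G k U x) reach_subset
      (by omega) hB
    refine ⟨L, hL, fun J hJ => ?_, Or.inl hlen⟩
    rwa [eq_of_subset_of_card_le hJ.subset_reach (by rw [hJ.isNClique.card_eq]; omega)]

/-- The number `β` of heavy colours is small as long as the slack `σ` is large. A vertex of reach
`k - 1` takes one loan and costs at least `k - 3` of the slack, a vertex of reach `k` takes up to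
three loans and costs at least `k - 1`. -/
def Budget (k β : ℕ) (σ : ℤ) : Prop :=
  (k + 3 < σ → β = 0) ∧ (k + 1 < σ → β ≤ 1) ∧ (k ≤ σ → β ≤ 2) ∧ (k - 2 ≤ σ → β ≤ 5)

/-- The set `U` has been coloured in such a way that the colouring can be extended to a larger
set, as long as some `k`-clique sticks out of `U` and meets `U` in at least an edge. -/
structure IsStage (G : SimpleGraph V) (k : ℕ) (U : Finset V) : Prop where
  slack_le : slack G k U ≤ 2 * k
  card_reach_le : ∀ x ∉ U, #(reach G k U x) ≤ k
  exists_colouring : ∃ (c : Sym2 V → ℕ) (B : Finset ℕ),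
    IsGoodColouring G k c U B ∧ Budget k #B (slack G k U)

theorem degIn_insert_le : degIn G (insert y U) x ≤ degIn G U x + 1 := by
  classical
  rw [degIn, filter_insert]
  split_ifs
  · exact card_insert_le _ _
  · exact Nat.le_succ _

theorem le_degIn_of_lt_card_reach_insert
    (hmax : ∀ J, IsAttached G k U x J → degIn G U x ≤ degIn G U y)
    (hlt : k < #(reach G k (insert y U) x)) : k ≤ degIn G U y := by
  classical
  by_cases hat : ∃ J, IsAttached G k U x J
  · obtain ⟨J, hJ⟩ := hat
    have := hmax J hJ
    have := card_reach_le_degIn (G := G) (k := k) (U := insert y U) (x := x)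
    have := degIn_insert_le (G := G) (U := U) (x := x) (y := y)
    omega
  · push Not at hat
    have hsub : reach G k (insert y U) x ⊆ insert y {w ∈ U | G.Adj y w} := by
      intro w hw
      obtain ⟨J, hJ, hwJ⟩ := mem_reach.1 hw
      have hyJ : y ∈ J := by
        by_contra hyJ
        exact hat J ⟨(subset_insert_iff_of_notMem hyJ).1 hJ.subset, hJ.isNClique, hJ.adj⟩
      rw [mem_insert, mem_filter]
      exact or_iff_not_imp_left.2 fun hwy => ⟨mem_of_mem_insert_of_ne (hJ.subset hwJ) hwy,
        hJ.isNClique.isClique hyJ hwJ (Ne.symm hwy)⟩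
    exact Nat.le_of_lt_succ (hlt.trans_le ((card_le_card hsub).trans (card_insert_le _ _)))

theorem IsStage.exists_colouring_insert (h : IsStage G k U) (hk : 5 ≤ k) (hG : IsSparse G k)
    (hy : y ∉ U) (hI : IsAttached G k U y I) : ∃ (c : Sym2 V → ℕ) (B : Finset ℕ),
      IsGoodColouring G k c (insert y U) B ∧ Budget k #B (slack G k (insert y U)) := by
  obtain ⟨c, B, hc, hb₁, hb₂, hb₃, hb₄⟩ := h.exists_colouring
  have hdeg := card_reach_le_degIn (G := G) (k := k) (U := U) (x := y)
  have hreach := hI.le_card_reach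
  have hle := h.slack_le
  have hslack := slack_insert (G := G) (k := k) hy
  have hpos := hG _ (insert_nonempty y U)
  obtain ⟨L, hL, hset, hlen⟩ := hc.exists_loan hk hI (h.card_reach_le y hy) (hb₄ (by omega))
    fun _ => hb₃ (by omega)
  obtain ⟨c', B', hc', hB'⟩ := hc.exists_lend hy hL hset
  refine ⟨c', B', hc', ?_⟩
  unfold Budget
  omega

theorem IsStage.insert_vertex (h : IsStage G k U) (hk : 5 ≤ k) (hG : IsSparse G k) (hy : y ∉ U)
    (hI : IsAttached G k U y I)
    (hmax : ∀ x ∉ U, ∀ J, IsAttached G k U x J → degIn G U x ≤ degIn G U y) :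
    IsStage G k (insert y U) where
  slack_le := by
    have hdeg := card_reach_le_degIn (G := G) (k := k) (U := U) (x := y)
    have hreach := hI.le_card_reach
    have := h.slack_le
    rw [slack_insert hy]
    omega
  card_reach_le x hx := by
    by_contra! hlt
    have hdegy := le_degIn_of_lt_card_reach_insert
      (hmax x fun hxU => hx (mem_insert_of_mem hxU)) hlt
    have hdegx := hlt.trans_le card_reach_le_degIn
    have hpos := hG _ (insert_nonempty x (insert y U))
    have := h.slack_le
    rw [slack_insert hx, slack_insert hy] at hpos
    omega
  exists_colouring := h.exists_colouring_insert hk hG hy hI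

/-- A list of pairs of disjoint edges inside `U'` but not inside `U`, all of them different. Each
pair is going to receive a common colour. -/
structure IsPairing (U U' : Finset V) (L : List (Sym2 V × Sym2 V)) : Prop where
  fst_mem : ∀ q ∈ L, q.1 ∈ edgesIn U' ∧ q.1 ∉ U.sym2
  snd_mem : ∀ q ∈ L, q.2 ∈ edgesIn U' ∧ q.2 ∉ U.sym2
  notMem : ∀ q ∈ L, ∀ x ∈ q.1, x ∉ q.2
  pairwise : L.Pairwise fun q r => q.1 ≠ r.1 ∧ q.1 ≠ r.2 ∧ q.2 ≠ r.1 ∧ q.2 ≠ r.2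

theorem IsPairing.snd_ne_fst {L : List (Sym2 V × Sym2 V)} (hL : IsPairing U U' L)
    {q r : Sym2 V × Sym2 V} (hq : q ∈ L) (hr : r ∈ L) : q.2 ≠ r.1 := by
  intro heq
  by_cases hqr : q = r
  · subst hqr
    exact hL.notMem q hq _ q.1.out_fst_mem (heq ▸ q.1.out_fst_mem)
  · have hsymm : Std.Symm fun q r : Sym2 V × Sym2 V =>
        q.1 ≠ r.1 ∧ q.1 ≠ r.2 ∧ q.2 ≠ r.1 ∧ q.2 ≠ r.2 :=
      ⟨fun _ _ h => ⟨h.1.symm, h.2.2.1.symm, h.2.1.symm, h.2.2.2.symm⟩⟩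
    exact (hL.pairwise.forall hq hr hqr).2.2.1 heq

theorem IsGoodColouring.exists_extend (h : IsGoodColouring G k c U B) (hU : U ⊆ U')
    {L : List (Sym2 V × Sym2 V)} (hL : IsPairing U U' L)
    (hcl : ∀ K ⊆ U', G.IsNClique k K → ¬ K ⊆ U → ∃ q ∈ L, q.1 ∈ edgesIn K ∧ q.2 ∈ edgesIn K) :
    ∃ c' : Sym2 V → α, IsGoodColouring G k c' U' B := by
  have hpriv : ∀ q ∈ L, HasPrivateColour c q.2 := fun q hq =>
    h.hasPrivateColour q.2 (hL.snd_mem q hq).2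
  obtain ⟨c', h', hnew, hold⟩ := (h.toIsColouringOn.mono hU subset_rfl).exists_recolouring L
    (fun q hq =>
      { left_mem := edgesIn_subset_sym2 (hL.fst_mem q hq).1
        right_mem := edgesIn_subset_sym2 (hL.snd_mem q hq).1
        isMissingAt := fun x hx => (hpriv q hq).isMissingAt (hL.notMem q hq x hx)
        mem_or_hasPrivateColour := Or.inr (hpriv q hq) })
    (hL.pairwise.imp_of_mem fun _ hr hqr =>
      ⟨hqr.1, hqr.2.1, fun heq => hqr.2.2.2 (hpriv _ hr _ heq)⟩)
  have hU_old : ∀ e ∈ U.sym2, c e = c' e := fun e he =>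
    (hold e fun q hq heq => (hL.fst_mem q hq).2 (heq ▸ he)).symm
  refine ⟨c', h', fun K hKU' hK hr => ?_⟩
  by_cases hKU : K ⊆ U
  · exact h.not_isRainbow K hKU hK (hr.congr hKU hU_old)
  · obtain ⟨q, hq, h₁, h₂⟩ := hcl K hKU' hK hKU
    have heq : c' q.1 = c' q.2 := by
      rw [hnew q hq, hold q.2 fun r hr => hL.snd_ne_fst hq hr]
    exact hL.snd_ne_fst hq hq (hr h₁ h₂ heq).symm

theorem isStage_of_isNClique [Countable V] (hk : 4 ≤ k) (hU : G.IsNClique k U) :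
    IsStage G k U where
  slack_le := (slack_of_isNClique hU).le
  card_reach_le _ _ := hU.card_eq ▸ card_le_card reach_subset
  exists_colouring := by
    obtain ⟨c, hc⟩ := exists_injective_nat (Sym2 V)
    have hgood : IsGoodColouring G k c ∅ ∅ :=
      ⟨isColouringOn_of_injective hc _ _, fun K hK hKk => by
        have := hKk.card_eq
        rw [subset_empty.1 hK, card_empty] at this
        omega⟩
    obtain ⟨T, hTU, hT⟩ := exists_subset_card_eq (hk.trans_eq hU.card_eq.symm)
    obtain ⟨x, y, z, w, hxy, hxz, hxw, hyz, hyw, hzw, rfl⟩ := card_eq_four.1 hT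
    simp only [insert_subset_iff, singleton_subset_iff] at hTU
    have hxyU : s(x, y) ∈ edgesIn U := mk_mem_edgesIn.2 ⟨⟨hTU.1, hTU.2.1⟩, hxy⟩
    have hzwU : s(z, w) ∈ edgesIn U := mk_mem_edgesIn.2 ⟨⟨hTU.2.2.1, hTU.2.2.2⟩, hzw⟩
    obtain ⟨c', hc'⟩ := hgood.exists_extend (empty_subset U) (L := [(s(x, y), s(z, w))])
      ⟨by simpa using hxyU, by simpa using hzwU, by simp [*], by simp⟩
      fun K hKU hK _ => ⟨_, List.mem_singleton_self _, by
        rw [eq_of_subset_of_card_le hKU (by rw [hK.card_eq, hU.card_eq])]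
        exact ⟨hxyU, hzwU⟩⟩
    exact ⟨c', ∅, hc', by simp [Budget]⟩

theorem exists_isPairing_of_three_le {N C : Finset V} (hU : U ⊆ U') (hNU : Disjoint U N)
    (hN' : N ⊆ U') (hCU : C ⊆ U) (hN : 3 ≤ #N) (hC : 2 ≤ #C) :
    ∃ L, IsPairing U U' L ∧ ∀ K, N ⊆ K → #(C \ K) ≤ 1 →
      ∃ q ∈ L, q.1 ∈ edgesIn K ∧ q.2 ∈ edgesIn K := by
  obtain ⟨x, hx, y, hy, z, hz, hxy, hxz, hyz⟩ := two_lt_card.1 hN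
  obtain ⟨a, ha, b, hb, hab⟩ := one_lt_card.1 hC
  have hne {n v : V} (hn : n ∈ N) (hv : v ∈ C) : n ≠ v := fun hnv =>
    disjoint_right.1 hNU hn (hnv ▸ hCU hv)
  have hxa := hne hx ha
  have hxb := hne hx hb
  have hya := hne hy ha
  have hyb := hne hy hb
  have hza := hne hz ha
  have hzb := hne hz hb
  have hxU := disjoint_right.1 hNU hx
  have hyU := disjoint_right.1 hNU hy
  have hzU := disjoint_right.1 hNU hz
  refine ⟨[(s(x, y), s(z, a)), (s(y, z), s(x, b))], ⟨?_, ?_, ?_, ?_⟩, fun K hNK hCK => ?_⟩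
  · simp [mk_mem_edgesIn, *, hN' hx, hN' hy, hN' hz]
  · simp [mk_mem_edgesIn, *, hN' hx, hN' hz, hU (hCU ha), hU (hCU hb)]
  · simp only [List.forall_mem_cons, Sym2.mem_iff]
    grind
  · simp only [List.pairwise_cons, List.Pairwise.nil, List.forall_mem_cons, List.not_mem_nil,
      false_imp_iff, and_true, ne_eq, Sym2.eq_iff]
    grind
  · have haK : a ∈ K ∨ b ∈ K := by
      by_contra! hcon
      exact hab (card_le_one.1 hCK a (mem_sdiff.2 ⟨ha, hcon.1⟩) b (mem_sdiff.2 ⟨hb, hcon.2⟩))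
    rcases haK with haK | hbK
    · exact ⟨(s(x, y), s(z, a)), by simp, by simp [mk_mem_edgesIn, *, hNK hx, hNK hy, hNK hz]⟩
    · exact ⟨(s(y, z), s(x, b)), by simp, by simp [mk_mem_edgesIn, *, hNK hx, hNK hy, hNK hz]⟩

theorem exists_isPairing_of_two_le {N C : Finset V} (hU : U ⊆ U') (hNU : Disjoint U N)
    (hN' : N ⊆ U') (hCU : C ⊆ U) (hN : 2 ≤ #N) (hC : 3 ≤ #C) :
    ∃ L, IsPairing U U' L ∧ ∀ K, N ⊆ K → #(C \ K) ≤ 1 →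
      ∃ q ∈ L, q.1 ∈ edgesIn K ∧ q.2 ∈ edgesIn K := by
  obtain ⟨x, hx, y, hy, hxy⟩ := one_lt_card.1 hN
  obtain ⟨a, ha, b, hb, d, hd, hab, had, hbd⟩ := two_lt_card.1 hC
  have hne {n v : V} (hn : n ∈ N) (hv : v ∈ C) : n ≠ v := fun hnv =>
    disjoint_right.1 hNU hn (hnv ▸ hCU hv)
  have hxU := disjoint_right.1 hNU hx
  have hyU := disjoint_right.1 hNU hy
  refine ⟨[(s(x, a), s(y, b)), (s(x, b), s(y, d)), (s(x, d), s(y, a))], ⟨?_, ?_, ?_, ?_⟩,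
    fun K hNK hCK => ?_⟩
  · simp [mk_mem_edgesIn, *, hN' hx, hU (hCU ha), hU (hCU hb), hU (hCU hd)]
  · simp [mk_mem_edgesIn, *, hN' hy, hU (hCU ha), hU (hCU hb), hU (hCU hd)]
  · simp only [List.forall_mem_cons, Sym2.mem_iff]
    grind
  · simp only [List.pairwise_cons, List.Pairwise.nil, List.forall_mem_cons, List.not_mem_nil,
      false_imp_iff, and_true, ne_eq, Sym2.eq_iff]
    grind
  · have hmem {v v' : V} (hv : v ∈ C) (hv' : v' ∈ C) (hvv' : v ≠ v') : v ∈ K ∨ v' ∈ K := by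
      by_contra! hcon
      exact hvv' (card_le_one.1 hCK v (mem_sdiff.2 ⟨hv, hcon.1⟩) v' (mem_sdiff.2 ⟨hv', hcon.2⟩))
    have hedge {n v : V} (hn : n ∈ N) (hv : v ∈ C) (hvK : v ∈ K) : s(n, v) ∈ edgesIn K :=
      mk_mem_edgesIn.2 ⟨⟨hNK hn, hvK⟩, hne hn hv⟩
    by_cases haK : a ∈ K
    · rcases hmem hb hd hbd with hbK | hdK
      · exact ⟨(s(x, a), s(y, b)), by simp, hedge hx ha haK, hedge hy hb hbK⟩
      · exact ⟨(s(x, d), s(y, a)), by simp, hedge hx hd hdK, hedge hy ha haK⟩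
    · exact ⟨(s(x, b), s(y, d)), by simp, hedge hx hb ((hmem ha hb hab).resolve_left haK),
        hedge hy hd ((hmem ha hd had).resolve_left haK)⟩

/-- A `k`-clique that sticks out of `U` and meets `U` in as many vertices as possible, at least
two. -/
structure IsLargestOverlap (G : SimpleGraph V) (k : ℕ) (U K : Finset V) : Prop where
  isNClique : G.IsNClique k K
  not_subset : ¬ K ⊆ U
  two_le_card_inter : 2 ≤ #(K ∩ U)
  card_inter_le : ∀ K', G.IsNClique k K' → ¬ K' ⊆ U → #(K' ∩ U) ≤ #(K ∩ U)

theorem exists_isLargestOverlap [Finite V] (hK : G.IsNClique k J) (hKU : ¬ J ⊆ U)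
    (h2 : 2 ≤ #(J ∩ U)) : ∃ K, IsLargestOverlap G k U K := by
  obtain ⟨K, hK', hmax⟩ := Set.exists_max_image {K | G.IsNClique k K ∧ ¬ K ⊆ U}
    (fun K => #(K ∩ U)) (Set.toFinite _) ⟨J, hK, hKU⟩
  exact ⟨K, hK'.1, hK'.2, h2.trans (hmax J ⟨hK, hKU⟩), fun K'' h h' => hmax K'' ⟨h, h'⟩⟩

variable {K K' C : Finset V}

theorem adj_of_mem_sdiff_of_mem_inter (hK : G.IsNClique k K) {n w : V} (hn : n ∈ K \ U)
    (hw : w ∈ K ∩ U) : G.Adj n w :=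
  hK.isClique (mem_sdiff.1 hn).1 (mem_inter.1 hw).1 fun h =>
    (mem_sdiff.1 hn).2 (h ▸ (mem_inter.1 hw).2)

theorem card_le_card_inter_add_card_inter_sdiff (h : K' ⊆ U ∪ K) :
    #K' ≤ #(K' ∩ U) + #(K' ∩ (K \ U)) := by
  rw [← card_inter_add_card_sdiff K' U]
  gcongr
  exact subset_inter sdiff_subset (sdiff_subset_sdiff h subset_rfl |>.trans
    (union_sdiff_left U K).subset)

theorem two_le_card_sdiff_of_forall_not_isAttached (hK : G.IsNClique k K) (hKU : ¬ K ⊆ U)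
    (hno : ∀ x ∉ U, ∀ I, ¬ IsAttached G k U x I) : 2 ≤ #(K \ U) := by
  by_contra! hlt
  obtain ⟨x, hxK, hxU⟩ := not_subset.1 hKU
  refine hno x hxU _ (isAttached_erase hK hxK fun y hy => ?_)
  by_cases hyU : y ∈ U
  · exact mem_insert_of_mem hyU
  · exact mem_insert.2 (Or.inl (card_le_one.1 (Nat.le_of_lt_succ hlt) y (mem_sdiff.2 ⟨hy, hyU⟩) x
      (mem_sdiff.2 ⟨hxK, hxU⟩)))

theorem card_sdiff_mul_card_inter_le_adjPairs (hK : G.IsNClique k K) :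
    #(K \ U) * #(K ∩ U) ≤ adjPairs G (K \ U) U :=
  mul_card_le_adjPairs inter_subset_right fun _ hn _ hw => adj_of_mem_sdiff_of_mem_inter hK hn hw

theorem slack_union_le (hK : G.IsNClique k K) (h2 : 2 ≤ #(K ∩ U)) :
    slack G k (U ∪ K) ≤ slack G k U := by
  have hadj : (#(K \ U) : ℤ) * #(K ∩ U) ≤ adjPairs G (K \ U) U := by
    exact_mod_cast card_sdiff_mul_card_inter_le_adjPairs hK
  have hprod : (#(K \ U) : ℤ) * 2 ≤ #(K \ U) * #(K ∩ U) := by gcongr; exact_mod_cast h2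
  rw [slack_union_of_isNClique hK]
  linarith

theorem card_le_of_forall_adj_sdiff (hG : IsSparse G k) (hU : slack G k U ≤ 2 * k)
    (hK : G.IsNClique k K) (hm : 2 ≤ #(K \ U)) (hi : 2 ≤ #(K ∩ U)) (hCU : C ⊆ U)
    (hC : ∀ n ∈ K \ U, ∀ w ∈ C, G.Adj n w) : #C ≤ #(K ∩ U) + 1 := by
  by_contra! hlt
  have hadj : (#(K \ U) : ℤ) * (#(K ∩ U) + 2) ≤ adjPairs G (K \ U) U := by
    exact_mod_cast (Nat.mul_le_mul_left _ hlt).trans (mul_card_le_adjPairs hCU hC)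
  have hcard : (#(K \ U) : ℤ) + #(K ∩ U) = k := by
    exact_mod_cast (card_sdiff_add_card_inter K U).trans hK.card_eq
  have hpos := hG (U ∪ K) ((card_pos.1 (by omega : 0 < #(K ∩ U))).mono
    (inter_subset_left.trans subset_union_right))
  rw [slack_union_of_isNClique hK] at hpos
  nlinarith

theorem exists_mem_reach_notMem (hK : G.IsNClique k K) (hlt : k < #(reach G k (U ∪ K) x)) :
    ∃ w ∈ reach G k (U ∪ K) x, w ∈ U ∧ w ∉ K := by
  obtain ⟨w, hw, hwK⟩ := exists_mem_notMem_of_card_lt_card (hK.card_eq.trans_lt hlt)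
  exact ⟨w, hw, (mem_union.1 (reach_subset hw)).resolve_right hwK, hwK⟩

namespace IsLargestOverlap

theorem sdiff_subset_of_subset_union (h : IsLargestOverlap G k U K) (hK' : G.IsNClique k K')
    (hK'U : ¬ K' ⊆ U) (hsub : K' ⊆ U ∪ K) : K \ U ⊆ K' := by
  have hle := h.card_inter_le K' hK' hK'U
  have hcard := card_le_card_inter_add_card_inter_sdiff hsub
  have hK := card_sdiff_add_card_inter K U
  rw [hK'.card_eq] at hcard
  rw [h.isNClique.card_eq] at hK
  exact inter_eq_right.1 (eq_of_subset_of_card_le inter_subset_right (by omega))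

theorem card_sdiff_le_one (h : IsLargestOverlap G k U K) (hK' : G.IsNClique k K')
    (hK'U : ¬ K' ⊆ U) (hsub : K' ⊆ U ∪ K) (hC : #C ≤ #(K ∩ U) + 1)
    (hmem : ∀ w ∈ U, (∀ n ∈ K \ U, G.Adj n w) → w ∈ C) : #(C \ K') ≤ 1 := by
  have hNK' := h.sdiff_subset_of_subset_union hK' hK'U hsub
  have hinter : K' ∩ U ⊆ C ∩ K' := fun w hw => by
    obtain ⟨hwK', hwU⟩ := mem_inter.1 hw
    refine mem_inter.2 ⟨hmem w hwU fun n hn => hK'.isClique (hNK' hn) hwK' ?_, hwK'⟩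
    rintro rfl
    exact (mem_sdiff.1 hn).2 hwU
  have hcard := card_le_card_inter_add_card_inter_sdiff hsub
  have hN := card_le_card (inter_subset_right (s₁ := K') (s₂ := K \ U))
  have hinter_card := card_le_card hinter
  have hK := card_sdiff_add_card_inter K U
  have hCK' := card_sdiff_add_card_inter C K'
  rw [hK'.card_eq] at hcard
  rw [h.isNClique.card_eq] at hK
  omega

theorem card_sdiff_le_degIn_add_one (h : IsLargestOverlap G k U K) (hk : 1 ≤ k) (hx : x ∉ U)
    (hI : IsAttached G k (U ∪ K) x I) (hwI : w ∈ I) (hwU : w ∈ U) :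
    #(K \ U) ≤ degIn G (K \ U) w + 1 := by
  have hle := h.card_inter_le _ (hI.isNClique_insert hk) fun hsub => hx (hsub (mem_insert_self x I))
  have hcard := card_le_card_inter_add_card_inter_sdiff hI.subset
  have hK := card_sdiff_add_card_inter K U
  rw [insert_inter_of_notMem hx] at hle
  rw [hI.isNClique.card_eq] at hcard
  rw [h.isNClique.card_eq] at hK
  have hdeg : #(I ∩ (K \ U)) ≤ degIn G (K \ U) w := card_le_degIn inter_subset_right fun v hv => by
    obtain ⟨hvI, hvN⟩ := mem_inter.1 hv
    refine hI.isNClique.isClique hwI hvI ?_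
    rintro rfl
    exact (mem_sdiff.1 hvN).2 hwU
  omega

theorem card_reach_union_le (h : IsLargestOverlap G k U K) (hk : 5 ≤ k) (hG : IsSparse G k)
    (hU : slack G k U ≤ 2 * k) (hm : 2 ≤ #(K \ U)) (hx : x ∉ U ∪ K) :
    #(reach G k (U ∪ K) x) ≤ k := by
  by_contra! hlt
  obtain ⟨w, hw, hwU, hwK⟩ := exists_mem_reach_notMem h.isNClique hlt
  obtain ⟨I, hI, hwI⟩ := mem_reach.1 hw
  have hdegw := h.card_sdiff_le_degIn_add_one (by omega) (fun hxU => hx (mem_union_left _ hxU))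
    hI hwI hwU
  have hadj := mul_card_add_degIn_le_adjPairs inter_subset_right hwU
    (fun hw' => hwK (mem_inter.1 hw').1) fun n hn w hw =>
    adj_of_mem_sdiff_of_mem_inter h.isNClique (U := U) hn hw
  have hdegx := hlt.trans_le card_reach_le_degIn
  have hpos := hG _ (insert_nonempty x (U ∪ K))
  rw [slack_insert hx, slack_union_of_isNClique h.isNClique] at hpos
  have hcard := (card_sdiff_add_card_inter K U).trans h.isNClique.card_eq
  have hi := h.two_le_card_inter
  generalize #(K \ U) = m at *
  generalize #(K ∩ U) = i at *
  have hprod : m * i ≤ k := by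
    zify at *
    linarith
  nlinarith [hprod]

theorem exists_isPairing (h : IsLargestOverlap G k U K) (hk : 5 ≤ k) (hG : IsSparse G k)
    (hU : slack G k U ≤ 2 * k) (hm : 2 ≤ #(K \ U)) :
    ∃ L, IsPairing U (U ∪ K) L ∧ ∀ K' ⊆ U ∪ K, G.IsNClique k K' → ¬ K' ⊆ U →
      ∃ q ∈ L, q.1 ∈ edgesIn K' ∧ q.2 ∈ edgesIn K' := by
  classical
  let C : Finset V := {w ∈ U | ∀ n ∈ K \ U, G.Adj n w}
  have hCU : C ⊆ U := filter_subset _ _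
  have hle : #(K ∩ U) ≤ #C := card_le_card fun w hw => mem_filter.2
    ⟨(mem_inter.1 hw).2, fun n hn => adj_of_mem_sdiff_of_mem_inter h.isNClique hn hw⟩
  have hge : #C ≤ #(K ∩ U) + 1 := card_le_of_forall_adj_sdiff hG hU h.isNClique hm
    h.two_le_card_inter hCU fun n hn w hw => (mem_filter.1 hw).2 n hn
  have hcard := (card_sdiff_add_card_inter K U).trans h.isNClique.card_eq
  have hi := h.two_le_card_inter
  have hN : K \ U ⊆ U ∪ K := sdiff_subset.trans subset_union_right
  obtain ⟨L, hL, hcl⟩ : ∃ L, IsPairing U (U ∪ K) L ∧ ∀ K', K \ U ⊆ K' → #(C \ K') ≤ 1 →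
      ∃ q ∈ L, q.1 ∈ edgesIn K' ∧ q.2 ∈ edgesIn K' := by
    rcases hm.eq_or_lt with hm | hm
    · exact exists_isPairing_of_two_le subset_union_left disjoint_sdiff hN hCU hm.le (by omega)
    · exact exists_isPairing_of_three_le subset_union_left disjoint_sdiff hN hCU hm (by omega)
  exact ⟨L, hL, fun K' hsub hK' hK'U => hcl K' (h.sdiff_subset_of_subset_union hK' hK'U hsub)
    (h.card_sdiff_le_one hK' hK'U hsub hge fun w hw hadj => mem_filter.2 ⟨hw, hadj⟩)⟩

end IsLargestOverlap

theorem IsStage.union_clique (h : IsStage G k U) (hk : 5 ≤ k) (hG : IsSparse G k)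
    (hK : IsLargestOverlap G k U K) (hm : 2 ≤ #(K \ U)) : IsStage G k (U ∪ K) where
  slack_le := (slack_union_le hK.isNClique hK.two_le_card_inter).trans h.slack_le
  card_reach_le _ hx := hK.card_reach_union_le hk hG h.slack_le hm hx
  exists_colouring := by
    obtain ⟨c, B, hc, hb⟩ := h.exists_colouring
    obtain ⟨L, hL, hcl⟩ := hK.exists_isPairing hk hG h.slack_le hm
    obtain ⟨c', hc'⟩ := hc.exists_extend subset_union_left hL hcl
    have hslack := slack_union_le hK.isNClique hK.two_le_card_inter
    refine ⟨c', B, hc', ?_⟩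
    unfold Budget at *
    omega

theorem IsStage.exists_ssubset [Finite V] (h : IsStage G k U) (hk : 5 ≤ k) (hG : IsSparse G k)
    (hK : G.IsNClique k K) (hKU : ¬ K ⊆ U) (h2 : 2 ≤ #(K ∩ U)) :
    ∃ U', U ⊂ U' ∧ IsStage G k U' := by
  by_cases hno : ∀ x ∉ U, ∀ I, ¬ IsAttached G k U x I
  · obtain ⟨K', hK'⟩ := exists_isLargestOverlap hK hKU h2
    have hm := two_le_card_sdiff_of_forall_not_isAttached hK'.isNClique hK'.not_subset hno
    exact ⟨U ∪ K', left_lt_sup.2 hK'.not_subset, h.union_clique hk hG hK' hm⟩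
  · push Not at hno
    obtain ⟨y₀, hy₀, hat⟩ := hno
    obtain ⟨y, ⟨hy, I, hI⟩, hmax⟩ := Set.exists_max_image {y | y ∉ U ∧ ∃ I, IsAttached G k U y I}
      (degIn G U) (Set.toFinite _) ⟨y₀, hy₀, hat⟩
    exact ⟨insert y U, ssubset_insert hy,
      h.insert_vertex hk hG hy hI fun x hx J hJ => hmax x ⟨hx, J, hJ⟩⟩

end Stage

section Gluing

variable {V α β : Type*} {G : SimpleGraph V} {k : ℕ} {c : Sym2 V → α}
  {c' : Sym2 V → β} {K U : Finset V}

theorem deleteEdges_sym2_lt (hk : 2 ≤ k) (hK : G.IsNClique k K) (hKU : K ⊆ U) :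
    G.deleteEdges U.sym2 < G := by
  obtain ⟨a, ha, b, hb, hab⟩ := one_lt_card.1 (hk.trans_eq hK.card_eq.symm)
  refine (SimpleGraph.deleteEdges_le _).lt_of_not_ge fun hle => ?_
  exact (SimpleGraph.deleteEdges_adj.1 (hle (hK.isClique ha hb hab))).2
    (mk_mem_sym2_iff.2 ⟨hKU ha, hKU hb⟩)

variable [DecidableEq V]

/-- The colouring by `c` inside `U` and by `c'` elsewhere, on disjoint supplies of colours. -/
def glue (c : Sym2 V → α) (c' : Sym2 V → β) (U : Finset V) (e : Sym2 V) : α ⊕ β :=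
  if e ∈ U.sym2 then .inl (c e) else .inr (c' e)

theorem isProper_glue (hc : IsProper c) (hc' : IsProper c') : IsProper (glue c c' U) := by
  intro x e he f hf heq
  unfold glue at heq
  split_ifs at heq
  · exact hc x he hf (Sum.inl_injective heq)
  · exact hc' x he hf (Sum.inr_injective heq)

theorem isRainbow_of_glue_of_subset (h : IsRainbow (glue c c' U) K) (hKU : K ⊆ U) :
    IsRainbow c K := by
  intro e he f hf heq
  refine h he hf ?_
  rw [glue, glue, if_pos (sym2_mono hKU (edgesIn_subset_sym2 he)),
    if_pos (sym2_mono hKU (edgesIn_subset_sym2 hf)), heq]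

theorem notMem_sym2_of_card_inter_le_one (hKU : #(K ∩ U) ≤ 1) {e : Sym2 V} (he : e ∈ edgesIn K) :
    e ∉ U.sym2 := by
  induction e with
  | _ a b =>
    obtain ⟨⟨ha, hb⟩, hab⟩ := mk_mem_edgesIn.1 he
    rw [mk_mem_sym2_iff]
    exact fun h => hab (card_le_one.1 hKU a (mem_inter.2 ⟨ha, h.1⟩) b (mem_inter.2 ⟨hb, h.2⟩))

theorem isRainbow_of_glue_of_card_inter_le_one (h : IsRainbow (glue c c' U) K)
    (hKU : #(K ∩ U) ≤ 1) : IsRainbow c' K := by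
  intro e he f hf heq
  refine h he hf ?_
  rw [glue, glue, if_neg (notMem_sym2_of_card_inter_le_one hKU he),
    if_neg (notMem_sym2_of_card_inter_le_one hKU hf), heq]

theorem isNClique_deleteEdges_of_card_inter_le_one (hK : G.IsNClique k K) (hKU : #(K ∩ U) ≤ 1) :
    (G.deleteEdges U.sym2).IsNClique k K where
  isClique _ ha _ hb hab := SimpleGraph.deleteEdges_adj.2 ⟨hK.isClique ha hb hab,
    notMem_sym2_of_card_inter_le_one hKU (mk_mem_edgesIn.2 ⟨⟨ha, hb⟩, hab⟩)⟩
  card_eq := hK.card_eq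

theorem IsSparse.exists_isStage [Finite V] (hG : IsSparse G k) (hk : 5 ≤ k)
    (hK : G.IsNClique k K) :
    ∃ U, IsStage G k U ∧ K ⊆ U ∧ ∀ K', G.IsNClique k K' → K' ⊆ U ∨ #(K' ∩ U) ≤ 1 := by
  obtain ⟨U, hKU, hU⟩ := Finite.exists_le_maximal (isStage_of_isNClique (by omega) hK)
  refine ⟨U, hU.prop, hKU, fun K' hK' => or_iff_not_imp_left.2 fun hK'U => ?_⟩
  by_contra! hlt
  obtain ⟨U', hUU', hU'⟩ := hU.prop.exists_ssubset hk hG hK' hK'U hlt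
  exact hU.not_prop_of_gt hUU' hU'

theorem IsSparse.exists_isProper_forall_not_isRainbow [Finite V] (hG : IsSparse G k) (hk : 5 ≤ k) :
    ∃ c : Sym2 V → ℕ, IsProper c ∧ ∀ K, G.IsNClique k K → ¬ IsRainbow c K := by
  induction G using WellFoundedLT.induction with
  | ind G ih =>
    by_cases hcl : ∃ K, G.IsNClique k K
    · obtain ⟨K, hK⟩ := hcl
      obtain ⟨U, hU, hKU, hcliques⟩ := hG.exists_isStage hk hK
      obtain ⟨c, _, hc, -⟩ := hU.exists_colouring
      have hlt := deleteEdges_sym2_lt (by omega) hK hKU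
      obtain ⟨c', hc', hK'⟩ := ih _ hlt (hG.mono hlt.le)
      refine ⟨Equiv.natSumNatEquivNat ∘ glue c c' U,
        (isProper_glue hc.isProper hc').comp_injective (Equiv.injective _), fun K' hK'' hr => ?_⟩
      have hr' : IsRainbow (glue c c' U) K' := Set.InjOn.of_comp hr
      rcases hcliques K' hK'' with hsub | hinter
      · exact hc.not_isRainbow K' hsub hK'' (isRainbow_of_glue_of_subset hr' hsub)
      · exact hK' K' (isNClique_deleteEdges_of_card_inter_le_one hK'' hinter)
          (isRainbow_of_glue_of_card_inter_le_one hr' hinter)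
    · obtain ⟨c, hc⟩ := exists_injective_nat (Sym2 V)
      exact ⟨c, isProper_of_injective hc, fun K hK => absurd ⟨K, hK⟩ hcl⟩

theorem mem_edgeSet_of_mem_edgesIn (hK : G.IsClique K) {e : Sym2 V} (he : e ∈ edgesIn K) :
    e ∈ G.edgeSet := by
  induction e with
  | _ a b =>
    obtain ⟨⟨ha, hb⟩, hab⟩ := mk_mem_edgesIn.1 he
    exact hK ha hb hab

end Gluing

end AntiRamsey

open AntiRamsey in
theorem exists_proper_colouring_no_rainbow_general {V : Type*} [Finite V] (k : ℕ) (hk : 5 ≤ k)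
    (G : SimpleGraph V)
    (hm : ∀ J : G.Subgraph, J.verts.Nonempty →
      (J.edgeSet.ncard : ℝ) / (J.verts.ncard : ℝ) < ((k : ℝ) + 1) / 2) :
    ∃ c : Sym2 V → ℕ,
      (∀ e₁ ∈ G.edgeSet, ∀ e₂ ∈ G.edgeSet, e₁ ≠ e₂ →
        (∃ x, x ∈ e₁ ∧ x ∈ e₂) → c e₁ ≠ c e₂) ∧
      (∀ s : Finset V, G.IsNClique k s →
        ∃ e₁ ∈ G.edgeSet, ∃ e₂ ∈ G.edgeSet,
          (∀ x ∈ e₁, x ∈ s) ∧ (∀ x ∈ e₂, x ∈ s) ∧ e₁ ≠ e₂ ∧ c e₁ = c e₂) := by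
  classical
  obtain ⟨c, hc, hr⟩ := (isSparse_of_forall_subgraph hm).exists_isProper_forall_not_isRainbow hk
  refine ⟨c, fun e₁ _ e₂ _ hne ⟨x, hx₁, hx₂⟩ heq => hne (hc x hx₁ hx₂ heq), fun K hK => ?_⟩
  obtain ⟨e, he, f, hf, heq, hne⟩ := not_isRainbow_iff.1 (hr K hK)
  exact ⟨e, mem_edgeSet_of_mem_edgesIn hK.isClique he, f, mem_edgeSet_of_mem_edgesIn hK.isClique hf,
    (mem_edgesIn.1 he).1, (mem_edgesIn.1 hf).1, hne, heq⟩

/-- For every `k ≥ 5`, every connected graph `G` on at least `k` vertices with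
maximum density `m(G) < (k+1)/2`, all of whose vertices and edges lie in a single
`K_k`-component, admits a proper edge-colouring in which no `k`-clique is
rainbow. -/
theorem exists_proper_colouring_no_rainbow {V : Type*} [Fintype V] [DecidableEq V]
    (k : ℕ) (hk : 5 ≤ k) (G : SimpleGraph V)
    (hconn : G.Connected)
    (hcard : k ≤ Fintype.card V)
    (hm : ∀ J : G.Subgraph, J.verts.Nonempty →
      (J.edgeSet.ncard : ℝ) / (J.verts.ncard : ℝ) < ((k : ℝ) + 1) / 2)
    (hvtx : ∀ x : V, ∃ s : Finset V, G.IsNClique k s ∧ x ∈ s)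
    (hedge : ∀ x y : V, G.Adj x y → ∃ s : Finset V, G.IsNClique k s ∧ x ∈ s ∧ y ∈ s)
    (hcomp : ∀ s t : Finset V, G.IsNClique k s → G.IsNClique k t →
      Relation.ReflTransGen
        (fun a b : Finset V => G.IsNClique k a ∧ G.IsNClique k b ∧ 2 ≤ (a ∩ b).card) s t) :
    ∃ c : Sym2 V → ℕ,
      (∀ e₁ ∈ G.edgeSet, ∀ e₂ ∈ G.edgeSet, e₁ ≠ e₂ →
        (∃ x, x ∈ e₁ ∧ x ∈ e₂) → c e₁ ≠ c e₂) ∧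
      (∀ s : Finset V, G.IsNClique k s →
        ∃ e₁ ∈ G.edgeSet, ∃ e₂ ∈ G.edgeSet,
          (∀ x ∈ e₁, x ∈ s) ∧ (∀ x ∈ e₂, x ∈ s) ∧ e₁ ≠ e₂ ∧ c e₁ = c e₂) :=
  exists_proper_colouring_no_rainbow_general k hk G hm
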